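/- arXiv:1302.3492 — 2 statements merged into one kernel-verified Lean document; each statement's English description precedes it below -/
import Mathlib

section
/- Let (X,Y) have joint pmf P_{XY} on finite alphabets with full-support marginals, and for each n ≥ 1 let (X^n, Y^n) denote n i.i.d. copies of (X,Y), so that the joint pmf of (X^n,Y^n) is the n-fold product P_{XY}^{⊗n}. Then s*(X^n; Y^n) = s*(X;Y) for every n ≥ 1 (tensorization of s*). -/
open scoped BigOperators

noncomputable section

/-- A probability mass function on a finite type, as a real-valued function. -/
def IsPMF {α : Type*} [Fintype α] (p : α → ℝ) : Prop :=
  (∀ a, 0 ≤ p a) ∧ ∑ a, p a = 1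

/-- Kullback–Leibler divergence `D(q ‖ p)` between pmfs on a finite type. -/
def klDiv {α : Type*} [Fintype α] (q p : α → ℝ) : ℝ :=
  ∑ a, q a * Real.logb 2 (q a / p a)

variable {𝓧 𝓨 : Type*} [Fintype 𝓧] [Fintype 𝓨]

/-- x-marginal of a joint pmf. -/
def margX (P : 𝓧 → 𝓨 → ℝ) (x : 𝓧) : ℝ := ∑ y, P x y

/-- y-marginal of a joint pmf. -/
def margY (P : 𝓧 → 𝓨 → ℝ) (y : 𝓨) : ℝ := ∑ x, P x y

/-- Output distribution of channel `P_{Y|X}` (from joint pmf `P`) driven by input `Q`. -/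
def chanOut (P : 𝓧 → 𝓨 → ℝ) (Q : 𝓧 → ℝ) (y : 𝓨) : ℝ :=
  ∑ x, Q x * (P x y / margX P x)

/-- `s*(X;Y)`, for `(X,Y)` with joint pmf `P`. -/
def sStar (P : 𝓧 → 𝓨 → ℝ) : ℝ :=
  sSup { r : ℝ | ∃ Q : 𝓧 → ℝ, IsPMF Q ∧ Q ≠ margX P ∧
    r = klDiv (chanOut P Q) (margY P) / klDiv Q (margX P) }

/-- Mutual information `I(X;Y)` of a joint pmf. -/
def mutualInfo (P : 𝓧 → 𝓨 → ℝ) : ℝ :=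
  ∑ x, ∑ y, P x y * Real.logb 2 (P x y / (margX P x * margY P y))

/-- swapped joint pmf, for `s*(Y;X)` etc. -/
def swap (P : 𝓧 → 𝓨 → ℝ) : 𝓨 → 𝓧 → ℝ := fun y x => P x y

/-- n-fold memoryless extension of a joint source. -/
def iid (P : 𝓧 → 𝓨 → ℝ) (n : ℕ) : (Fin n → 𝓧) → (Fin n → 𝓨) → ℝ :=
  fun xs ys => ∏ i, P (xs i) (ys i)


namespace STens

/-- Well-formed joint pmf with full-support marginals. -/
structure Nice {A B : Type*} [Fintype A] [Fintype B] (P : A → B → ℝ) : Prop where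
  nn : ∀ a b, 0 ≤ P a b
  sum : ∑ a, ∑ b, P a b = 1
  hX : ∀ a, 0 < margX P a
  hY : ∀ b, 0 < margY P b

/-- The strong data processing inequality with constant `s`. -/
def Good {A B : Type*} [Fintype A] [Fintype B] (P : A → B → ℝ) (s : ℝ) : Prop :=
  ∀ Q : A → ℝ, IsPMF Q → klDiv (chanOut P Q) (margY P) ≤ s * klDiv Q (margX P)

/-- Homogeneous extension of the divergence. -/
def hK {A : Type*} [Fintype A] (v p : A → ℝ) : ℝ :=
  ∑ a, v a * Real.logb 2 (v a / ((∑ c, v c) * p a))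

/-- Product of two joint pmfs. -/
def tens {A B A' B' : Type*} (P : A → B → ℝ) (P' : A' → B' → ℝ) : A × A' → B × B' → ℝ :=
  fun a b => P a.1 b.1 * P' a.2 b.2

lemma term_ineq (a b A B : ℝ) (ha : 0 ≤ a) (hb : 0 ≤ b) (hab : b = 0 → a = 0)
    (hA : 0 < A) (hB : 0 < B) :
    a * Real.log (A / B) + a - b * (A / B) ≤ a * Real.log (a / b) := by
  rcases ha.eq_or_lt with h | h
  · subst h
    have : 0 ≤ b * (A / B) := by positivity
    simp; exact this
  · have hb' : 0 < b := lt_of_le_of_ne hb (fun h' => by have := hab h'.symm; linarith)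
    have h1 : Real.log (a / b) = Real.log (A / B) + Real.log ((a * B) / (b * A)) := by
      rw [← Real.log_mul (by positivity) (by positivity)]
      congr 1; field_simp
    have h2 : 1 - ((a * B) / (b * A))⁻¹ ≤ Real.log ((a * B) / (b * A)) :=
      Real.one_sub_inv_le_log_of_pos (by positivity)
    rw [h1]
    have h3 := mul_le_mul_of_nonneg_left h2 h.le
    have h4 : a * (1 - ((a * B) / (b * A))⁻¹) = a - b * (A / B) := by
      field_simp
    linarith

lemma log_sum {ι : Type*} [Fintype ι] (a b : ι → ℝ) (ha : ∀ i, 0 ≤ a i) (hb : ∀ i, 0 ≤ b i)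
    (hab : ∀ i, b i = 0 → a i = 0) :
    (∑ i, a i) * Real.logb 2 ((∑ i, a i) / ∑ i, b i) ≤ ∑ i, a i * Real.logb 2 (a i / b i) := by
  have hl : 0 < Real.log 2 := Real.log_pos (by norm_num)
  simp only [Real.logb, ← mul_div_assoc, ← Finset.sum_div]
  apply div_le_div_of_nonneg_right _ hl.le
  rcases (Finset.sum_nonneg (fun i _ => ha i) : 0 ≤ ∑ i, a i).eq_or_lt with h | h
  · have h0 : ∀ i, a i = 0 := by
      intro i
      exact (Finset.sum_eq_zero_iff_of_nonneg (fun i _ => ha i)).1 h.symm i (Finset.mem_univ i)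
    simp [h0]
  · have hB : 0 < ∑ i, b i := by
      refine lt_of_le_of_ne (Finset.sum_nonneg fun i _ => hb i) (fun h' => ?_)
      have h0 : ∀ i, a i = 0 := by
        intro i
        exact hab i
          ((Finset.sum_eq_zero_iff_of_nonneg (fun i _ => hb i)).1 h'.symm i (Finset.mem_univ i))
      simp [h0] at h
    have := Finset.sum_le_sum (s := Finset.univ)
      (fun i _ => term_ineq (a i) (b i) _ _ (ha i) (hb i) (hab i) h hB)
    rw [Finset.sum_sub_distrib, Finset.sum_add_distrib, ← Finset.sum_mul, ← Finset.sum_mul] at this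
    have e : (∑ i, b i) * ((∑ i, a i) / ∑ i, b i) = ∑ i, a i := by field_simp
    linarith

lemma klDiv_nonneg {A : Type*} [Fintype A] (q p : A → ℝ) (hq : IsPMF q) (hp : ∀ a, 0 < p a)
    (hp1 : ∑ a, p a = 1) : 0 ≤ klDiv q p := by
  have := log_sum q p hq.1 (fun a => (hp a).le) (fun a h => absurd h (hp a).ne')
  rw [hq.2, hp1] at this
  simpa [klDiv] using this

section
variable {A B A' B' : Type*} [Fintype A] [Fintype B] [Fintype A'] [Fintype B']

lemma Nice.sumX {P : A → B → ℝ} (h : Nice P) : ∑ a, margX P a = 1 := h.sum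

lemma Nice.sumY {P : A → B → ℝ} (h : Nice P) : ∑ b, margY P b = 1 := by
  rw [← h.sum, Finset.sum_comm]; rfl

lemma Nice.W_nn {P : A → B → ℝ} (h : Nice P) (a : A) (b : B) : 0 ≤ P a b / margX P a :=
  div_nonneg (h.nn a b) (h.hX a).le

lemma Nice.W_sum {P : A → B → ℝ} (h : Nice P) (a : A) : ∑ b, P a b / margX P a = 1 := by
  rw [← Finset.sum_div]; exact div_self (h.hX a).ne'

lemma chanOut_nn {P : A → B → ℝ} (h : Nice P) {Q : A → ℝ} (hQ : ∀ a, 0 ≤ Q a) (b : B) :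
    0 ≤ chanOut P Q b :=
  Finset.sum_nonneg fun a _ => mul_nonneg (hQ a) (h.W_nn a b)

lemma chanOut_sum {P : A → B → ℝ} (h : Nice P) (Q : A → ℝ) :
    ∑ b, chanOut P Q b = ∑ a, Q a := by
  unfold chanOut
  rw [Finset.sum_comm]
  simp [← Finset.mul_sum, h.W_sum]

lemma chanOut_pmf {P : A → B → ℝ} (h : Nice P) {Q : A → ℝ} (hQ : IsPMF Q) :
    IsPMF (chanOut P Q) :=
  ⟨chanOut_nn h hQ.1, by rw [chanOut_sum h, hQ.2]⟩

lemma chanOut_marg {P : A → B → ℝ} (h : Nice P) : chanOut P (margX P) = margY P := by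
  ext b
  unfold chanOut margY
  refine Finset.sum_congr rfl fun a _ => ?_
  have := (h.hX a).ne'
  field_simp

lemma scaled_term (w a b : ℝ) : (a * w) * Real.logb 2 (a * w / (b * w))
    = w * (a * Real.logb 2 (a / b)) := by
  by_cases hw : w = 0
  · simp [hw]
  · rw [mul_div_mul_right _ _ hw]; ring

/-- Data processing. -/
lemma dpi {P : A → B → ℝ} (h : Nice P) {Q : A → ℝ} (hQ : ∀ a, 0 ≤ Q a) :
    klDiv (chanOut P Q) (margY P) ≤ klDiv Q (margX P) := by
  unfold klDiv
  calc _ = ∑ b, chanOut P Q b * Real.logb 2 (chanOut P Q b / chanOut P (margX P) b) := by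
        rw [chanOut_marg h]
    _ ≤ ∑ b, ∑ a, (Q a * (P a b / margX P a)) * Real.logb 2
          (Q a * (P a b / margX P a) / (margX P a * (P a b / margX P a))) := by
        refine Finset.sum_le_sum fun b _ => ?_
        refine log_sum (fun a => Q a * (P a b / margX P a))
          (fun a => margX P a * (P a b / margX P a))
          (fun a => mul_nonneg (hQ a) (h.W_nn a b))
          (fun a => mul_nonneg (h.hX a).le (h.W_nn a b)) ?_
        intro a ha
        rcases mul_eq_zero.1 ha with h' | h'
        · exact absurd h' (h.hX a).ne'
        · simp only [h', mul_zero]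
    _ = _ := by
        simp only [scaled_term]
        rw [Finset.sum_comm]
        simp [← Finset.sum_mul, h.W_sum]

lemma sStar_nonneg {P : A → B → ℝ} (h : Nice P) : 0 ≤ sStar P := by
  apply Real.sSup_nonneg
  rintro r ⟨Q, hQ, -, rfl⟩
  exact div_nonneg (klDiv_nonneg _ _ (chanOut_pmf h hQ) h.hY h.sumY)
    (klDiv_nonneg _ _ hQ h.hX h.sumX)

lemma good_sStar {P : A → B → ℝ} (h : Nice P) : Good P (sStar P) := by
  intro Q hQ
  rcases (klDiv_nonneg _ _ hQ h.hX h.sumX).eq_or_lt with h0 | h0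
  · have := dpi h hQ.1
    rw [← h0] at this ⊢; simpa using this
  · rw [← div_le_iff₀ h0]
    apply le_csSup
    · refine ⟨1, ?_⟩
      rintro r ⟨Q, hQ, -, rfl⟩
      exact div_le_one_of_le₀ (dpi h hQ.1) (klDiv_nonneg _ _ hQ h.hX h.sumX)
    · refine ⟨Q, hQ, ?_, rfl⟩
      rintro rfl
      have : klDiv (margX P) (margX P) = 0 := by
        unfold klDiv
        refine Finset.sum_eq_zero fun a _ => ?_
        rw [div_self (h.hX a).ne']; simp
      linarith

lemma sStar_le {P : A → B → ℝ} (h : Nice P) {s : ℝ} (hs : 0 ≤ s) (hg : Good P s) :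
    sStar P ≤ s := by
  apply Real.sSup_le _ hs
  rintro r ⟨Q, hQ, -, rfl⟩
  exact div_le_of_le_mul₀ (klDiv_nonneg _ _ hQ h.hX h.sumX) hs (hg Q hQ)

lemma hK_smul (c : ℝ) (v p : A → ℝ) : hK (fun a => c * v a) p = c * hK v p := by
  unfold hK
  rw [Finset.mul_sum]
  refine Finset.sum_congr rfl fun a _ => ?_
  by_cases hc : c = 0
  · simp [hc]
  · rw [← Finset.mul_sum, mul_assoc c _ (p a), mul_div_mul_left _ _ hc]; ring

lemma hK_pmf {v : A → ℝ} (hv : IsPMF v) (p : A → ℝ) : hK v p = klDiv v p := by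
  unfold hK klDiv; rw [hv.2]; simp

lemma chanOut_smul (P : A → B → ℝ) (c : ℝ) (v : A → ℝ) :
    chanOut P (fun a => c * v a) = fun b => c * chanOut P v b := by
  ext b; unfold chanOut; rw [Finset.mul_sum]
  exact Finset.sum_congr rfl fun a _ => by ring

lemma good_hK {P : A → B → ℝ} (h : Nice P) {s : ℝ} (hg : Good P s) (v : A → ℝ)
    (hv : ∀ a, 0 ≤ v a) : hK (chanOut P v) (margY P) ≤ s * hK v (margX P) := by
  rcases (Finset.sum_nonneg (fun i _ => hv i) : 0 ≤ ∑ i, v i).eq_or_lt with h0 | h0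
  · have h0 : ∀ i, v i = 0 := by
      intro i
      exact (Finset.sum_eq_zero_iff_of_nonneg (fun i _ => hv i)).1 h0.symm i (Finset.mem_univ i)
    simp [hK, chanOut, h0]
  · set c := ∑ i, v i with hc
    have hq : IsPMF (fun a => c⁻¹ * v a) :=
      ⟨fun a => mul_nonneg (by positivity) (hv a), by
        rw [← Finset.mul_sum, ← hc]; field_simp⟩
    have := hg _ hq
    rw [← hK_pmf hq, ← hK_pmf (chanOut_pmf h hq), chanOut_smul, hK_smul, hK_smul] at this
    have h2 := mul_le_mul_of_nonneg_left this h0.le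
    have e : ∀ x : ℝ, c * (c⁻¹ * x) = x := fun x => by field_simp
    rw [e, mul_left_comm s, e] at h2
    exact h2

lemma hK_sum {ι : Type*} [Fintype ι] (w : ι → ℝ) (v : ι → A → ℝ) (p : A → ℝ)
    (hw : ∀ i, 0 ≤ w i) (hv : ∀ i a, 0 ≤ v i a) (hp : ∀ a, 0 < p a) :
    hK (fun a => ∑ i, v i a * w i) p ≤ ∑ i, w i * hK (v i) p := by
  have e : ∀ i, w i * hK (v i) p = ∑ a, (v i a * w i) * Real.logb 2
      (v i a * w i / (((∑ c, v i c) * p a) * w i)) := by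
    intro i; simp only [scaled_term]; rw [← Finset.mul_sum]; rfl
  simp only [e]
  rw [Finset.sum_comm]
  unfold hK
  refine Finset.sum_le_sum fun a _ => ?_
  have e2 : (∑ c, ∑ i, v i c * w i) * p a = ∑ i, (((∑ c, v i c) * p a) * w i) := by
    rw [Finset.sum_comm, Finset.sum_mul]
    refine Finset.sum_congr rfl fun i _ => ?_
    rw [← Finset.sum_mul]; ring
  rw [e2]
  refine log_sum (fun i => v i a * w i) (fun i => ((∑ c, v i c) * p a) * w i)
    (fun i => mul_nonneg (hv i a) (hw i))
    (fun i => mul_nonneg (mul_nonneg (Finset.sum_nonneg fun c _ => hv i c) (hp a).le) (hw i)) ?_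
  intro i hi
  rcases mul_eq_zero.1 hi with h' | h'
  · rcases mul_eq_zero.1 h' with h' | h'
    · have := (Finset.sum_eq_zero_iff_of_nonneg (fun c _ => hv i c)).1 h' a (Finset.mem_univ a)
      simp only [this, zero_mul]
    · exact absurd h' (hp a).ne'
  · simp only [h', mul_zero]

lemma chain (Q : A × A' → ℝ) (hQ : ∀ a, 0 ≤ Q a) (p : A → ℝ) (p' : A' → ℝ)
    (hp : ∀ a, 0 < p a) (hp' : ∀ a, 0 < p' a) :
    klDiv Q (fun a => p a.1 * p' a.2) =
      klDiv (fun a => ∑ a', Q (a, a')) p + ∑ a, hK (fun a' => Q (a, a')) p' := by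
  unfold klDiv hK
  rw [Fintype.sum_prod_type, ← Finset.sum_add_distrib]
  refine Finset.sum_congr rfl fun a _ => ?_
  rw [Finset.sum_mul, ← Finset.sum_add_distrib]
  refine Finset.sum_congr rfl fun a' _ => ?_
  rcases (hQ (a, a')).eq_or_lt with h | h
  · simp [← h]
  · have h1 : 0 < ∑ c, Q (a, c) := lt_of_lt_of_le h
      (Finset.single_le_sum (f := fun c => Q (a, c)) (fun c _ => hQ (a, c)) (Finset.mem_univ a'))
    have := hp a
    have := hp' a'
    rw [← mul_add, ← Real.logb_mul (by positivity) (by positivity)]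
    congr 2
    field_simp

lemma margX_tens (P : A → B → ℝ) (P' : A' → B' → ℝ) :
    margX (tens P P') = fun a => margX P a.1 * margX P' a.2 := by
  ext a; simp only [margX, tens, Fintype.sum_prod_type, Finset.sum_mul_sum]

lemma margY_tens (P : A → B → ℝ) (P' : A' → B' → ℝ) :
    margY (tens P P') = fun a => margY P a.1 * margY P' a.2 := by
  ext a; simp only [margY, tens, Fintype.sum_prod_type, Finset.sum_mul_sum]

lemma nice_tens {P : A → B → ℝ} {P' : A' → B' → ℝ} (h : Nice P) (h' : Nice P') :
    Nice (tens P P') where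
  nn a b := mul_nonneg (h.nn _ _) (h'.nn _ _)
  sum := by
    change ∑ a, margX (tens P P') a = 1
    rw [margX_tens, Fintype.sum_prod_type]
    simp [← Finset.mul_sum, h.sumX, h'.sumX]
  hX a := by rw [margX_tens]; exact mul_pos (h.hX _) (h'.hX _)
  hY a := by rw [margY_tens]; exact mul_pos (h.hY _) (h'.hY _)

lemma chanOut_tens (P : A → B → ℝ) (P' : A' → B' → ℝ) (Q : A × A' → ℝ) (b : B) (b' : B') :
    chanOut (tens P P') Q (b, b') =
      chanOut P' (fun a' => ∑ a, Q (a, a') * (P a b / margX P a)) b' := by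
  unfold chanOut
  rw [margX_tens, Fintype.sum_prod_type, Finset.sum_comm]
  refine Finset.sum_congr rfl fun a' _ => ?_
  rw [Finset.sum_mul]
  refine Finset.sum_congr rfl fun a _ => ?_
  simp only [tens]
  rw [mul_div_mul_comm, mul_assoc]

lemma good_tens {P : A → B → ℝ} {P' : A' → B' → ℝ} (h : Nice P) (h' : Nice P') {s : ℝ}
    (hs : 0 ≤ s) (hg : Good P s) (hg' : Good P' s) : Good (tens P P') s := by
  intro Q hQ
  have hn := nice_tens h h'
  rw [margX_tens, margY_tens, chain Q hQ.1 _ _ h.hX h'.hX,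
    chain _ (chanOut_nn hn hQ.1) _ _ h.hY h'.hY, mul_add]
  simp only [chanOut_tens]
  refine add_le_add ?_ ?_
  · have e : (fun b => ∑ b', chanOut P' (fun a' => ∑ a, Q (a, a') * (P a b / margX P a)) b')
        = chanOut P (fun a => ∑ a', Q (a, a')) := by
      ext b
      rw [chanOut_sum h', Finset.sum_comm]
      unfold chanOut
      exact Finset.sum_congr rfl fun a _ => by rw [Finset.sum_mul]
    rw [e]
    refine hg _ ⟨fun a => Finset.sum_nonneg fun _ _ => hQ.1 _, ?_⟩
    rw [← Fintype.sum_prod_type (f := Q)]; exact hQ.2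
  · calc _ ≤ ∑ b, s * hK (fun a' => ∑ a, Q (a, a') * (P a b / margX P a)) (margX P') :=
          Finset.sum_le_sum fun b _ => good_hK h' hg' _ fun a' =>
            Finset.sum_nonneg fun a _ => mul_nonneg (hQ.1 _) (h.W_nn a b)
      _ ≤ ∑ b, s * ∑ a, (P a b / margX P a) * hK (fun a' => Q (a, a')) (margX P') :=
          Finset.sum_le_sum fun b _ => mul_le_mul_of_nonneg_left
            (hK_sum (fun a => P a b / margX P a) (fun a a' => Q (a, a')) _
              (fun a => h.W_nn a b) (fun a a' => hQ.1 _) h'.hX) hs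
      _ = _ := by
          rw [← Finset.mul_sum, Finset.sum_comm]
          simp [← Finset.sum_mul, h.W_sum]

lemma klDiv_prod (q p : A → ℝ) (p' : A' → ℝ) (hp' : ∑ a, p' a = 1) :
    klDiv (fun a : A × A' => q a.1 * p' a.2) (fun a => p a.1 * p' a.2) = klDiv q p := by
  unfold klDiv
  simp only [scaled_term]
  rw [Fintype.sum_prod_type]
  simp [← Finset.sum_mul, hp']

lemma good_of_tens {P : A → B → ℝ} {P' : A' → B' → ℝ} (h' : Nice P') {s : ℝ}
    (hg : Good (tens P P') s) : Good P s := by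
  intro Q hQ
  have hq : IsPMF (fun a : A × A' => Q a.1 * margX P' a.2) := by
    refine ⟨fun a => mul_nonneg (hQ.1 _) (h'.hX _).le, ?_⟩
    rw [Fintype.sum_prod_type]
    simp [← Finset.mul_sum, h'.sumX, hQ.2]
  have := hg _ hq
  rw [margX_tens, margY_tens, klDiv_prod _ _ _ h'.sumX] at this
  have e : chanOut (tens P P') (fun a : A × A' => Q a.1 * margX P' a.2)
      = fun b => chanOut P Q b.1 * margY P' b.2 := by
    ext ⟨b, b'⟩
    rw [chanOut_tens]
    have e2 : (fun a' => ∑ a, Q a * margX P' a' * (P a b / margX P a))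
        = fun a' => chanOut P Q b * margX P' a' := by
      ext a'; unfold chanOut; rw [Finset.sum_mul]
      exact Finset.sum_congr rfl fun a _ => by ring
    simp only [e2]
    rw [chanOut_smul, chanOut_marg h']
  rwa [e, klDiv_prod _ _ _ h'.sumY] at this

lemma margX_tr (e : A ≃ A') (f : B ≃ B') {P : A → B → ℝ} {R : A' → B' → ℝ}
    (hPR : ∀ a b, R (e a) (f b) = P a b) (a : A) : margX R (e a) = margX P a := by
  unfold margX; rw [← f.sum_comp]; simp [hPR]

lemma margY_tr (e : A ≃ A') (f : B ≃ B') {P : A → B → ℝ} {R : A' → B' → ℝ}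
    (hPR : ∀ a b, R (e a) (f b) = P a b) (b : B) : margY R (f b) = margY P b := by
  unfold margY; rw [← e.sum_comp]; simp [hPR]

lemma chanOut_tr (e : A ≃ A') (f : B ≃ B') {P : A → B → ℝ} {R : A' → B' → ℝ}
    (hPR : ∀ a b, R (e a) (f b) = P a b) (Q : A' → ℝ) (b : B) : chanOut R Q (f b) = chanOut P (Q ∘ e) b := by
  unfold chanOut; rw [← e.sum_comp]; simp [hPR, margX_tr e f hPR]

lemma nice_tr (e : A ≃ A') (f : B ≃ B') {P : A → B → ℝ} {R : A' → B' → ℝ}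
    (hPR : ∀ a b, R (e a) (f b) = P a b) (h : Nice P) : Nice R where
  nn a b := by
    have := h.nn (e.symm a) (f.symm b)
    rw [← hPR] at this; simpa using this
  sum := by
    rw [← h.sum, ← e.sum_comp]
    exact Finset.sum_congr rfl fun a _ => margX_tr e f hPR a
  hX a := by
    have := h.hX (e.symm a)
    rw [← margX_tr e f hPR] at this; simpa using this
  hY a := by
    have := h.hY (f.symm a)
    rw [← margY_tr e f hPR] at this; simpa using this

lemma good_tr (e : A ≃ A') (f : B ≃ B') {P : A → B → ℝ} {R : A' → B' → ℝ}
    (hPR : ∀ a b, R (e a) (f b) = P a b) {s : ℝ} (h : Good P s) : Good R s := by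
  intro Q hQ
  have := h (Q ∘ e) ⟨fun a => hQ.1 _, by rw [← hQ.2, ← e.sum_comp]; rfl⟩
  unfold klDiv at this ⊢
  rw [← e.sum_comp, ← f.sum_comp]
  simpa [margX_tr e f hPR, margY_tr e f hPR, chanOut_tr e f hPR] using this

lemma iid_succ (P : A → B → ℝ) (n : ℕ) (a : A × (Fin n → A)) (b : B × (Fin n → B)) :
    iid P (n + 1) (Fin.consEquiv (fun _ => A) a) (Fin.consEquiv (fun _ => B) b)
      = tens P (iid P n) a b := by
  simp [iid, tens, Fin.prod_univ_succ, Fin.consEquiv]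

lemma nice_iid {P : A → B → ℝ} (h : Nice P) (n : ℕ) : Nice (iid P n) := by
  induction n with
  | zero => constructor <;> simp [iid, margX, margY]
  | succ n ih => exact nice_tr _ _ (iid_succ P n) (nice_tens h ih)

lemma good_iid {P : A → B → ℝ} (h : Nice P) {s : ℝ} (hs : 0 ≤ s) (hg : Good P s) (n : ℕ) :
    Good (iid P n) s := by
  induction n with
  | zero =>
    intro Q hQ
    have h1 : Q default = 1 := by simpa using hQ.2
    simp [klDiv, chanOut, margX, margY, iid, h1]
  | succ n ih => exact good_tr _ _ (iid_succ P n) (good_tens h (nice_iid h n) hs hg ih)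

lemma good_of_iid {P : A → B → ℝ} (h : Nice P) {s : ℝ} (n : ℕ) (hg : Good (iid P (n + 1)) s) :
    Good P s := by
  refine good_of_tens (nice_iid h n) (good_tr (Fin.consEquiv (fun _ => A)).symm
    (Fin.consEquiv (fun _ => B)).symm (fun a b => ?_) hg)
  rw [← iid_succ, Equiv.apply_symm_apply, Equiv.apply_symm_apply]

end

end STens

/-- tensorization of `s*`.  For an i.i.d. pair source,
`s*(Xⁿ;Yⁿ) = s*(X;Y)` for every `n ≥ 1`. -/
theorem sStar_tensorization (P : 𝓧 → 𝓨 → ℝ)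
    (hP : IsPMF (fun p : 𝓧 × 𝓨 => P p.1 p.2))
    (hX : ∀ x, 0 < margX P x) (hY : ∀ y, 0 < margY P y)
    (n : ℕ) (hn : 1 ≤ n) :
    sStar (iid P n) = sStar P := by
  have h : STens.Nice P := ⟨fun a b => hP.1 (a, b), by
    rw [← Fintype.sum_prod_type (f := fun p : 𝓧 × 𝓨 => P p.1 p.2)]; exact hP.2, hX, hY⟩
  obtain ⟨m, rfl⟩ : ∃ m, n = m + 1 := ⟨n - 1, by omega⟩
  have hn' := STens.nice_iid h (m + 1)
  apply le_antisymm
  · exact STens.sStar_le hn' (STens.sStar_nonneg h)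
      (STens.good_iid h (STens.sStar_nonneg h) (STens.good_sStar h) _)
  · exact STens.sStar_le h (STens.sStar_nonneg hn')
      (STens.good_of_iid h m (STens.good_sStar hn'))

end
end

section
/- Let ρ ∈ (0,1), let X ~ N(0,1), let Z ~ N(0,1) be independent of X, and set Y = ρX + √(1−ρ²)·Z, so that (X,Y) are jointly Gaussian, each with unit variance and correlation coefficient ρ, and P_Y = N(0,1). For a probability measure Q on ℝ, let Q_Y denote the law of ρX′ + √(1−ρ²)·Z where X′ ~ Q is independent of Z ~ N(0,1). Then sup { D(Q_Y ∥ P_Y) / D(Q ∥ P_X) : Q a probability measure on ℝ with 0 < D(Q ∥ P_X) < ∞ } = ρ², where D denotes Kullback–Leibler divergence between probability measures on ℝ. In particular, for jointly Gaussian unit-variance sources, s*(X;Y) = s*(Y;X) = ρ², hence ρ*(X,Y) = ρ². -/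
open MeasureTheory ProbabilityTheory
open scoped ENNReal

noncomputable section
attribute [local instance] Classical.propDecidable

/-- Kullback–Leibler divergence `D(μ ‖ ν) ∈ [0,∞]` between measures on `ℝ`, defined as
`∫ log (dμ/dν) dμ` when `μ ≪ ν` and this integral exists, and `+∞` otherwise. -/
def klM (μ ν : Measure ℝ) : ℝ≥0∞ :=
  if μ ≪ ν ∧ Integrable (llr μ ν) μ then ENNReal.ofReal (∫ x, llr μ ν x ∂μ) else ⊤

variable (ρ : ℝ)

/-- Output distribution of the additive Gaussian channel `Y = ρX′ + √(1−ρ²)Z`,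
`Z ~ N(0,1)` independent of `X′ ~ Q`. -/
def gaussChanOut (Q : Measure ℝ) : Measure ℝ :=
  Measure.map (fun p : ℝ × ℝ => ρ * p.1 + Real.sqrt (1 - ρ ^ 2) * p.2)
    (Q.prod (gaussianReal 0 1))


/-- The dual (Donsker–Varadhan) form of the strong data processing inequality. -/
def SDPI (c : ℝ) (μ : Measure ℂ) : Prop :=
  ∀ f g : ℝ → ℝ, Continuous f → Continuous g →
    (∃ a b : ℝ, 0 < a ∧ ∀ x, a ≤ f x ∧ f x ≤ b) → (∃ M : ℝ, ∀ x, |g x| ≤ M) →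
    ∫ z, f z.re * g z.im ∂μ ≤
      c * (∫ z, f z.re * Real.log (f z.re) ∂μ
        - (∫ z, f z.re ∂μ) * Real.log (∫ z, f z.re ∂μ))
      + (∫ z, f z.re ∂μ) * Real.log (∫ z, Real.exp (g z.im) ∂μ)

lemma sdpi_dirac (c : ℝ) : SDPI c (Measure.dirac 0) := by
  intro f g hf hg _ _
  simp [integral_dirac]

lemma sdpi_smul (c : ℝ) (μ : Measure ℂ) (h : SDPI c μ) (r : ℝ) :
    SDPI c (μ.map (r • ·)) := by
  intro f g hf hg ⟨a, b, ha, hab⟩ ⟨M, hM⟩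
  have := h (fun x => f (r * x)) (fun x => g (r * x)) (by fun_prop) (by fun_prop)
    ⟨a, b, ha, fun x => hab _⟩ ⟨M, fun x => hM _⟩
  have hm : Measurable (fun z : ℂ => r • z) := by fun_prop
  have hfl : Continuous fun x => f x * Real.log (f x) :=
    hf.mul (hf.log fun x => (ha.trans_le (hab x).1).ne')
  have key : ∀ F : ℂ → ℝ, Continuous F → ∫ z, F z ∂(μ.map (r • ·)) = ∫ z, F (r • z) ∂μ :=
    fun F hF => integral_map hm.aemeasurable hF.aestronglyMeasurable
  rw [key (fun z => f z.re * g z.im) (by fun_prop), key (fun z => f z.re) (by fun_prop),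
    key (fun z => f z.re * Real.log (f z.re)) (hfl.comp Complex.continuous_re),
    key (fun z => Real.exp (g z.im)) (by fun_prop)]
  simpa using this

lemma bdd_integrable {α : Type*} [MeasurableSpace α] [TopologicalSpace α] [OpensMeasurableSpace α]
    [SecondCountableTopology α]
    (μ : Measure α) [IsFiniteMeasure μ] (F : α → ℝ) (hF : Continuous F) (M : ℝ)
    (hM : ∀ x, |F x| ≤ M) : Integrable F μ :=
  Integrable.of_bound hF.measurable.aestronglyMeasurable M (Filter.Eventually.of_forall hM)

lemma cont_avg (ν : Measure ℂ) [IsFiniteMeasure ν] (F : ℝ → ℝ) (hF : Continuous F) (M : ℝ)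
    (hM : ∀ x, |F x| ≤ M) (L : ℂ → ℝ) (hL : Continuous L) :
    Continuous fun x => ∫ w, F (x + L w) ∂ν := by
  refine continuous_of_dominated (bound := fun _ => M) ?_ ?_ ?_ ?_
  · intro x
    exact Continuous.aestronglyMeasurable (by fun_prop)
  · intro x; exact Filter.Eventually.of_forall fun w => hM _
  · exact integrable_const _
  · exact Filter.Eventually.of_forall fun w => by fun_prop

lemma avg_bound (ν : Measure ℂ) [IsProbabilityMeasure ν] (F : ℂ → ℝ) (hF : Continuous F) (a b : ℝ)
    (h : ∀ x, a ≤ F x ∧ F x ≤ b) : a ≤ ∫ w, F w ∂ν ∧ ∫ w, F w ∂ν ≤ b := by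
  have hi : Integrable F ν := bdd_integrable ν F hF (max |a| |b|)
    (fun x => abs_le_max_abs_abs (h x).1 (h x).2)
  constructor
  · simpa using integral_mono (integrable_const a) hi (fun x => (h x).1)
  · simpa using integral_mono hi (integrable_const b) (fun x => (h x).2)

lemma log_abs_le {a b x : ℝ} (ha : 0 < a) (h1 : a ≤ x) (h2 : x ≤ b) :
    |Real.log x| ≤ max |Real.log a| |Real.log b| :=
  abs_le_max_abs_abs (Real.log_le_log ha h1) (Real.log_le_log (ha.trans_le h1) h2)

lemma sdpi_conv (c : ℝ) (μ ν : Measure ℂ) [IsProbabilityMeasure μ]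
    [IsProbabilityMeasure ν] (hμ : SDPI c μ) (hν : SDPI c ν) : SDPI c (μ ∗ ν) := by
  intro f g hf hg ⟨a, b, ha, hab⟩ ⟨M, hM⟩
  have hpos : ∀ x, 0 < f x := fun x => ha.trans_le (hab x).1
  have hb : 0 ≤ b := (hpos 0).le.trans (hab 0).2
  have hfabs : ∀ x, |f x| ≤ b := fun x => by rw [abs_of_pos (hpos x)]; exact (hab x).2
  have hfl : Continuous fun x => f x * Real.log (f x) :=
    hf.mul (hf.log fun x => (hpos x).ne')
  set K := max |Real.log a| |Real.log b| with hK
  have hK0 : 0 ≤ K := le_max_of_le_left (abs_nonneg _)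
  have hflb : ∀ x, |f x * Real.log (f x)| ≤ b * K := fun x => by
    rw [abs_mul]
    exact mul_le_mul (hfabs x) (log_abs_le ha (hab x).1 (hab x).2) (abs_nonneg _) hb
  have heb : ∀ x, Real.exp (-M) ≤ Real.exp (g x) ∧ Real.exp (g x) ≤ Real.exp M := fun x =>
    ⟨Real.exp_le_exp.2 (neg_le_of_abs_le (hM x)), Real.exp_le_exp.2 (le_of_abs_le (hM x))⟩
  have hM0 : 0 ≤ M := (abs_nonneg _).trans (hM 0)
  have hfgb : ∀ z : ℂ, |f z.re * g z.im| ≤ b * M := fun x => by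
    rw [abs_mul]
    exact mul_le_mul (hfabs _) (hM _) (abs_nonneg _) hb
  have key : ∀ F : ℂ → ℝ, Continuous F → (∃ B, ∀ z, |F z| ≤ B) →
      ∫ z, F z ∂(μ ∗ ν) = ∫ z, ∫ w, F (z + w) ∂ν ∂μ := by
    intro F hF ⟨B, hB⟩
    exact integral_conv (bdd_integrable _ F hF B hB)
  set fb : ℝ → ℝ := fun x => ∫ w : ℂ, f (x + w.re) ∂ν with hfb
  set eG : ℝ → ℝ := fun y => ∫ w : ℂ, Real.exp (g (y + w.im)) ∂ν with heG
  have hfbc : Continuous fb := cont_avg ν f hf b hfabs _ Complex.continuous_re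
  have hfbb : ∀ x, a ≤ fb x ∧ fb x ≤ b := fun x =>
    avg_bound ν (fun w => f (x + w.re)) (by fun_prop) a b (fun w => hab _)
  have hfbpos : ∀ x, 0 < fb x := fun x => ha.trans_le (hfbb x).1
  have heGc : Continuous eG := cont_avg ν (fun x => Real.exp (g x)) (by fun_prop) (Real.exp M)
    (fun x => by rw [Real.abs_exp]; exact (heb x).2) _ Complex.continuous_im
  have heGb : ∀ x, Real.exp (-M) ≤ eG x ∧ eG x ≤ Real.exp M := fun x =>
    avg_bound ν (fun w => Real.exp (g (x + w.im))) (by fun_prop) _ _ (fun w => heb _)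
  have heGpos : ∀ x, 0 < eG x := fun x => (Real.exp_pos _).trans_le (heGb x).1
  have hGc : Continuous fun y => Real.log (eG y) := heGc.log fun x => (heGpos x).ne'
  have hGb : ∀ y, |Real.log (eG y)| ≤ M := fun y => by
    have := log_abs_le (Real.exp_pos _) (heGb y).1 (heGb y).2
    simpa [abs_of_nonneg hM0] using this
  have h2 := hμ fb (fun y => Real.log (eG y)) hfbc hGc ⟨a, b, ha, hfbb⟩ ⟨M, hGb⟩
  simp only [Real.exp_log (heGpos _)] at h2
  have h1 : ∀ z : ℂ, ∫ w : ℂ, f (z.re + w.re) * g (z.im + w.im) ∂ν ≤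
      c * (∫ w : ℂ, f (z.re + w.re) * Real.log (f (z.re + w.re)) ∂ν
        - fb z.re * Real.log (fb z.re)) + fb z.re * Real.log (eG z.im) := fun z =>
    hν (fun x => f (z.re + x)) (fun y => g (z.im + y)) (by fun_prop) (by fun_prop)
      ⟨a, b, ha, fun x => hab _⟩ ⟨M, fun x => hM _⟩
  set E : ℂ → ℝ := fun z => ∫ w : ℂ, f (z.re + w.re) * Real.log (f (z.re + w.re)) ∂ν with hE
  have hEi : Integrable E μ := by
    refine bdd_integrable μ E ?_ (b * K) ?_
    · exact (cont_avg ν _ hfl _ hflb _ Complex.continuous_re).comp Complex.continuous_re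
    · intro z
      refine abs_le.2 ?_
      exact avg_bound ν (fun w => f (z.re + w.re) * Real.log (f (z.re + w.re)))
        (hfl.comp (by fun_prop)) _ _ (fun w => abs_le.1 (hflb _))
  have hfbl : Integrable (fun z : ℂ => fb z.re * Real.log (fb z.re)) μ := by
    refine bdd_integrable μ _ ?_ (b * K) ?_
    · exact (hfbc.mul (hfbc.log fun x => (hfbpos x).ne')).comp Complex.continuous_re
    · intro z
      rw [abs_mul, abs_of_pos (hfbpos _)]
      exact mul_le_mul (hfbb _).2 (log_abs_le ha (hfbb _).1 (hfbb _).2) (abs_nonneg _) hb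
  have hfbG : Integrable (fun z : ℂ => fb z.re * Real.log (eG z.im)) μ := by
    refine bdd_integrable μ _ ?_ (b * M) ?_
    · exact (hfbc.comp Complex.continuous_re).mul (hGc.comp Complex.continuous_im)
    · intro z
      rw [abs_mul, abs_of_pos (hfbpos _)]
      exact mul_le_mul (hfbb _).2 (hGb _) (abs_nonneg _) hb
  have hL : Integrable (fun z : ℂ => ∫ w : ℂ, f (z.re + w.re) * g (z.im + w.im) ∂ν) μ := by
    refine bdd_integrable μ _ ?_ (b * M) ?_
    · refine continuous_of_dominated (bound := fun _ => b * M) ?_ ?_ (integrable_const _) ?_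
      · intro x
        exact Continuous.aestronglyMeasurable (by fun_prop)
      · intro z; exact Filter.Eventually.of_forall fun w => by simpa using hfgb (z + w)
      · exact Filter.Eventually.of_forall fun w => by fun_prop
    · intro z
      refine abs_le.2 ?_
      exact avg_bound ν (fun w => f (z.re + w.re) * g (z.im + w.im)) (by fun_prop) _ _
        (fun w => abs_le.1 (by simpa using hfgb (z + w)))
  have hs : Integrable (fun z => E z - fb z.re * Real.log (fb z.re)) μ := hEi.sub hfbl
  have h3 := integral_mono hL ((hs.const_mul c).add hfbG) h1
  simp only [Pi.add_apply] at h3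
  rw [integral_add (hs.const_mul c) hfbG, integral_const_mul,
    integral_sub hEi hfbl] at h3
  rw [key (fun z => f z.re * g z.im) (by fun_prop) ⟨_, hfgb⟩,
    key (fun z => f z.re) (by fun_prop) ⟨_, fun z => hfabs _⟩,
    key (fun z => f z.re * Real.log (f z.re)) (hfl.comp Complex.continuous_re)
      ⟨_, fun z => hflb _⟩,
    key (fun z => Real.exp (g z.im)) (by fun_prop)
      ⟨Real.exp M, fun z => by rw [Real.abs_exp]; exact (heb _).2⟩]
  simp only [Complex.add_re, Complex.add_im]
  change _ ≤ c * (∫ z, E z ∂μ - (∫ z : ℂ, fb z.re ∂μ) * Real.log (∫ z : ℂ, fb z.re ∂μ))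
    + (∫ z : ℂ, fb z.re ∂μ) * Real.log (∫ z : ℂ, eG z.im ∂μ)
  linarith


lemma two_point_phi (r t : ℝ) (hr0 : 0 < r) (hr1 : r < 1) (ht0 : 0 ≤ t) (ht1 : t < 1) :
    (1 + r * t) * Real.log (1 + r * t) + (1 - r * t) * Real.log (1 - r * t) ≤
      r ^ 2 * ((1 + t) * Real.log (1 + t) + (1 - t) * Real.log (1 - t)) := by
  have hderiv : ∀ c : ℝ, 0 < c → c ≤ 1 → ∀ s ∈ Set.Ico (0:ℝ) 1,
      HasDerivAt (fun s => (1 + c * s) * Real.log (1 + c * s) + (1 - c * s) * Real.log (1 - c * s))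
        (c * (Real.log (1 + c * s) - Real.log (1 - c * s))) s := by
    intro c hc hc1 s ⟨hs0, hs1⟩
    have h1 : 0 < 1 + c * s := by positivity
    have h2 : 0 < 1 - c * s := by nlinarith
    have d1 : HasDerivAt (fun s => 1 + c * s) c s := by
      simpa using ((hasDerivAt_id s).const_mul c).const_add 1
    have d2 : HasDerivAt (fun s => 1 - c * s) (-c) s := by
      simpa using ((hasDerivAt_id s).const_mul c).const_sub 1
    have := (d1.mul (d1.log h1.ne')).add (d2.mul (d2.log h2.ne'))
    refine this.congr_deriv ?_
    field_simp
    ring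
  have hlog : ∀ s ∈ Set.Ico (0:ℝ) 1,
      Real.log (1 + r * s) - Real.log (1 - r * s) ≤ r * (Real.log (1 + s) - Real.log (1 - s)) := by
    have hmono : MonotoneOn (fun s => r * (Real.log (1 + s) - Real.log (1 - s)) -
        (Real.log (1 + r * s) - Real.log (1 - r * s))) (Set.Ico 0 1) := by
      have hd : ∀ s ∈ Set.Ico (0:ℝ) 1, HasDerivAt (fun s => r * (Real.log (1 + s) - Real.log (1 - s)) -
        (Real.log (1 + r * s) - Real.log (1 - r * s)))
          (r * (1 / (1 + s) + 1 / (1 - s)) - (r / (1 + r * s) + r / (1 - r * s))) s := by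
        intro s ⟨hs0, hs1⟩
        have h1 : 0 < 1 + r * s := by positivity
        have h2 : 0 < 1 - r * s := by nlinarith
        have d1 : HasDerivAt (fun s => 1 + r * s) r s := by
          simpa using ((hasDerivAt_id s).const_mul r).const_add 1
        have d2 : HasDerivAt (fun s => 1 - r * s) (-r) s := by
          simpa using ((hasDerivAt_id s).const_mul r).const_sub 1
        have d3 : HasDerivAt (fun s : ℝ => 1 + s) 1 s := by
          simpa using (hasDerivAt_id s).const_add 1
        have d4 : HasDerivAt (fun s : ℝ => 1 - s) (-1) s := by
          simpa using (hasDerivAt_id s).const_sub 1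
        have := (((d3.log (by linarith)).sub (d4.log (by linarith))).const_mul r).sub
          ((d1.log h1.ne').sub (d2.log h2.ne'))
        refine this.congr_deriv ?_
        ring
      refine monotoneOn_of_deriv_nonneg (convex_Ico 0 1)
        (fun s hs => (hd s hs).continuousAt.continuousWithinAt) ?_ ?_
      · intro s hs
        exact (hd s (interior_subset hs)).differentiableAt.differentiableWithinAt
      · intro s hs
        have hs' := interior_subset hs
        rw [(hd s hs').deriv]
        obtain ⟨hs0, hs1⟩ := hs'
        have h1 : 0 < 1 + r * s := by positivity
        have h2 : 0 < 1 - r * s := by nlinarith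
        have h3 : 0 < 1 - s := by linarith
        have h4 : 0 < 1 + s := by linarith
        have : r * (1 / (1 + s) + 1 / (1 - s)) - (r / (1 + r * s) + r / (1 - r * s))
            = 2 * r * s ^ 2 * (1 - r ^ 2) / ((1 + s) * (1 - s) * (1 + r * s) * (1 - r * s)) := by
          field_simp
          ring
        rw [this]
        have : 0 ≤ 1 - r ^ 2 := by nlinarith
        positivity
    intro s hs
    have := hmono ⟨le_refl 0, zero_lt_one⟩ hs hs.1
    simp at this
    linarith
  have hmono : MonotoneOn (fun t => r ^ 2 * ((1 + 1 * t) * Real.log (1 + 1 * t) + (1 - 1 * t) * Real.log (1 - 1 * t))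
      - ((1 + r * t) * Real.log (1 + r * t) + (1 - r * t) * Real.log (1 - r * t))) (Set.Ico 0 1) := by
    have hd := fun s hs => ((hderiv 1 one_pos le_rfl s hs).const_mul (r ^ 2)).sub
      (hderiv r hr0 hr1.le s hs)
    refine monotoneOn_of_deriv_nonneg (convex_Ico 0 1)
        (fun s hs => (hd s hs).continuousAt.continuousWithinAt) ?_ ?_
    · intro s hs
      exact (hd s (interior_subset hs)).differentiableAt.differentiableWithinAt
    · intro s hs
      have hs' := interior_subset hs
      have e := (hd s hs').deriv
      have := hlog s hs'
      refine le_of_le_of_eq ?_ e.symm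
      simp only [one_mul]
      nlinarith
  have := hmono ⟨le_refl 0, zero_lt_one⟩ ⟨ht0, ht1⟩ ht0
  simp at this
  linarith

lemma two_point_phi' (r t : ℝ) (hr0 : 0 < r) (hr1 : r < 1) (ht : |t| < 1) :
    (1 + r * t) * Real.log (1 + r * t) + (1 - r * t) * Real.log (1 - r * t) ≤
      r ^ 2 * ((1 + t) * Real.log (1 + t) + (1 - t) * Real.log (1 - t)) := by
  obtain ⟨h1, h2⟩ := abs_lt.1 ht
  rcases le_total 0 t with h | h
  · exact two_point_phi r t hr0 hr1 h h2
  · have := two_point_phi r (-t) hr0 hr1 (by linarith) (by linarith)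
    simp only [mul_neg, sub_neg_eq_add, ← sub_eq_add_neg] at this
    linarith

lemma two_point_dv (p q u v : ℝ) (hp : 0 < p) (hq : 0 < q) (hpq : p + q = 2) :
    p * u + q * v ≤ p * Real.log p + q * Real.log q +
      2 * Real.log ((Real.exp u + Real.exp v) / 2) := by
  set S := (Real.exp u + Real.exp v) / 2 with hS
  have hSp : 0 < S := by positivity
  have h1 := Real.log_le_sub_one_of_pos (x := Real.exp u / (p * S)) (by positivity)
  have h2 := Real.log_le_sub_one_of_pos (x := Real.exp v / (q * S)) (by positivity)
  rw [Real.log_div (by positivity) (by positivity), Real.log_mul (by positivity) (by positivity),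
    Real.log_exp] at h1 h2
  have h1' := mul_le_mul_of_nonneg_left h1 hp.le
  have h2' := mul_le_mul_of_nonneg_left h2 hq.le
  have e1 : p * (Real.exp u / (p * S) - 1) = Real.exp u / S - p := by field_simp
  have e2 : q * (Real.exp v / (q * S) - 1) = Real.exp v / S - q := by field_simp
  have e3 : Real.exp u / S + Real.exp v / S = 2 := by
    rw [← add_div, hS]; field_simp
  have e4 : p * Real.log S + q * Real.log S = 2 * Real.log S := by rw [← add_mul, hpq]
  linarith

lemma two_point (r a b u v : ℝ) (hr0 : 0 < r) (hr1 : r < 1) (ha : 0 < a) (hb : 0 < b) :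
    (1 + r) / 4 * (a * u + b * v) + (1 - r) / 4 * (a * v + b * u) ≤
      r ^ 2 * ((a * Real.log a + b * Real.log b) / 2 - (a + b) / 2 * Real.log ((a + b) / 2))
      + (a + b) / 2 * Real.log ((Real.exp u + Real.exp v) / 2) := by
  set m := (a + b) / 2 with hm
  have hmp : 0 < m := by positivity
  set t := (a - b) / (a + b) with ht
  have hab : 0 < a + b := by positivity
  have ea : a = m * (1 + t) := by rw [hm, ht]; field_simp; ring
  have eb : b = m * (1 - t) := by rw [hm, ht]; field_simp; ring
  have h1 : 0 < 1 + t := by by_contra h; nlinarith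
  have h2 : 0 < 1 - t := by by_contra h; nlinarith
  have hphi := two_point_phi' r t hr0 hr1 (abs_lt.2 ⟨by linarith, by linarith⟩)
  have hdv := two_point_dv (1 + r * t) (1 - r * t) u v (by nlinarith) (by nlinarith) (by ring)
  have la : Real.log a = Real.log m + Real.log (1 + t) := by
    rw [ea, Real.log_mul hmp.ne' h1.ne']
  have lb : Real.log b = Real.log m + Real.log (1 - t) := by
    rw [eb, Real.log_mul hmp.ne' h2.ne']
  rw [la, lb]
  have hh := mul_le_mul_of_nonneg_left (hdv.trans (add_le_add_left hphi _)) hmp.le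
  set A := Real.log (1 + t)
  set B := Real.log (1 - t)
  set L := Real.log m
  set S := Real.log ((Real.exp u + Real.exp v) / 2)
  rw [ea, eb]
  linarith

/-- Law of a correlated pair of signs. -/
noncomputable def signPair (r : ℝ) : Measure ℂ :=
  ENNReal.ofReal ((1 + r) / 4) • Measure.dirac (1 + Complex.I)
  + ENNReal.ofReal ((1 + r) / 4) • Measure.dirac (-1 - Complex.I)
  + ENNReal.ofReal ((1 - r) / 4) • Measure.dirac (1 - Complex.I)
  + ENNReal.ofReal ((1 - r) / 4) • Measure.dirac (-1 + Complex.I)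

lemma signPair_prob (r : ℝ) (hr0 : 0 < r) (hr1 : r < 1) : IsProbabilityMeasure (signPair r) := by
  constructor
  simp only [signPair, Measure.add_apply, Measure.smul_apply, measure_univ, smul_eq_mul, mul_one]
  rw [← ENNReal.ofReal_add (by linarith) (by linarith),
    ← ENNReal.ofReal_add (by linarith) (by linarith),
    ← ENNReal.ofReal_add (by linarith) (by linarith)]
  rw [← ENNReal.ofReal_one]
  congr 1; ring

lemma integral_signPair {E : Type*} [NormedAddCommGroup E] [NormedSpace ℝ E] [CompleteSpace E]
    (r : ℝ) (hr0 : 0 < r) (hr1 : r < 1) (F : ℂ → E) :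
    ∫ z, F z ∂(signPair r) = ((1 + r) / 4) • F (1 + Complex.I) + ((1 + r) / 4) • F (-1 - Complex.I)
      + ((1 - r) / 4) • F (1 - Complex.I) + ((1 - r) / 4) • F (-1 + Complex.I) := by
  have hi : ∀ (c : ℝ) (z : ℂ), Integrable F (ENNReal.ofReal c • Measure.dirac z) := fun c z =>
    (integrable_dirac (by simp)).smul_measure ENNReal.ofReal_ne_top
  unfold signPair
  rw [integral_add_measure (((hi _ _).add_measure (hi _ _)).add_measure (hi _ _)) (hi _ _),
    integral_add_measure ((hi _ _).add_measure (hi _ _)) (hi _ _),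
    integral_add_measure (hi _ _) (hi _ _)]
  simp only [integral_smul_measure, integral_dirac]
  rw [ENNReal.toReal_ofReal (by linarith), ENNReal.toReal_ofReal (by linarith)]

lemma sdpi_signPair (r : ℝ) (hr0 : 0 < r) (hr1 : r < 1) : SDPI (r ^ 2) (signPair r) := by
  intro f g hf hg ⟨a, b, ha, hab⟩ _
  have := two_point r (f 1) (f (-1)) (g 1) (g (-1)) hr0 hr1 (ha.trans_le (hab _).1)
    (ha.trans_le (hab _).1)
  simp only [integral_signPair r hr0 hr1, smul_eq_mul]
  simp only [Complex.add_re, Complex.add_im, Complex.sub_re, Complex.sub_im, Complex.one_re,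
    Complex.one_im, Complex.I_re, Complex.I_im, Complex.neg_re, Complex.neg_im, add_zero, zero_add,
    sub_zero, zero_sub, neg_zero]
  have e1 : (1 + r) / 4 * f 1 + (1 + r) / 4 * f (-1) + (1 - r) / 4 * f 1 + (1 - r) / 4 * f (-1)
    = (f 1 + f (-1)) / 2 := by ring
  have e2 : (1 + r) / 4 * Real.exp (g 1) + (1 + r) / 4 * Real.exp (g (-1))
    + (1 - r) / 4 * Real.exp (g (-1)) + (1 - r) / 4 * Real.exp (g 1)
    = (Real.exp (g 1) + Real.exp (g (-1))) / 2 := by ring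
  rw [e1, e2]
  linarith


noncomputable def signSum (r : ℝ) : ℕ → Measure ℂ
  | 0 => Measure.dirac 0
  | n + 1 => signSum r n ∗ signPair r

lemma signSum_prob (r : ℝ) (hr0 : 0 < r) (hr1 : r < 1) (n : ℕ) :
    IsProbabilityMeasure (signSum r n) := by
  have := signPair_prob r hr0 hr1
  induction n with
  | zero => unfold signSum; infer_instance
  | succ n ih => unfold signSum; infer_instance

lemma sdpi_signSum (r : ℝ) (hr0 : 0 < r) (hr1 : r < 1) (n : ℕ) :
    SDPI (r ^ 2) (signSum r n) := by
  have := signPair_prob r hr0 hr1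
  induction n with
  | zero => exact sdpi_dirac _
  | succ n ih =>
    have := signSum_prob r hr0 hr1 n
    exact sdpi_conv _ _ _ ih (sdpi_signPair r hr0 hr1)

lemma charFun_signSum (r : ℝ) (hr0 : 0 < r) (hr1 : r < 1) (n : ℕ) (t : ℂ) :
    charFun (signSum r n) t = (charFun (signPair r) t) ^ n := by
  have := signPair_prob r hr0 hr1
  induction n with
  | zero => simp [signSum, charFun_dirac]
  | succ n ih =>
    have := signSum_prob r hr0 hr1 n
    rw [signSum, charFun_conv, ih, pow_succ]

/-- Law of the Gaussian pair. -/
noncomputable def gaussPair (r : ℝ) : Measure ℂ :=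
  ((gaussianReal 0 1).prod (gaussianReal 0 1)).map
    (fun p : ℝ × ℝ => (⟨p.1, r * p.1 + Real.sqrt (1 - r ^ 2) * p.2⟩ : ℂ))

lemma gaussPair_cont (r : ℝ) : Continuous
    (fun p : ℝ × ℝ => (⟨p.1, r * p.1 + Real.sqrt (1 - r ^ 2) * p.2⟩ : ℂ)) := by
  have : (fun p : ℝ × ℝ => (⟨p.1, r * p.1 + Real.sqrt (1 - r ^ 2) * p.2⟩ : ℂ))
      = fun p : ℝ × ℝ => (p.1 : ℂ) + ((r * p.1 + Real.sqrt (1 - r ^ 2) * p.2 : ℝ) : ℂ) * Complex.I := by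
    funext p
    apply Complex.ext <;> simp
  rw [this]
  fun_prop

instance gaussPair_prob (r : ℝ) : IsProbabilityMeasure (gaussPair r) :=
  Measure.isProbabilityMeasure_map (gaussPair_cont r).aemeasurable

lemma charFun_gaussPair (r : ℝ) (hr0 : 0 < r) (hr1 : r < 1) (t : ℂ) :
    charFun (gaussPair r) t =
      Complex.exp (-((t.re ^ 2 + 2 * r * t.re * t.im + t.im ^ 2 : ℝ) : ℂ) / 2) := by
  rw [charFun_apply, gaussPair, integral_map (gaussPair_cont r).aemeasurable
    (Continuous.aestronglyMeasurable (by fun_prop))]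
  set σ := Real.sqrt (1 - r ^ 2) with hσ
  have hσ2 : σ ^ 2 = 1 - r ^ 2 := Real.sq_sqrt (by nlinarith)
  have : ∀ p : ℝ × ℝ, Complex.exp (((inner ℝ (⟨p.1, r * p.1 + σ * p.2⟩ : ℂ) t : ℝ) : ℂ) * Complex.I)
      = Complex.exp (((t.re + t.im * r : ℝ) : ℂ) * p.1 * Complex.I) *
        Complex.exp (((t.im * σ : ℝ) : ℂ) * p.2 * Complex.I) := by
    intro p
    rw [← Complex.exp_add, Complex.inner]
    congr 1
    simp
    ring
  simp_rw [this]
  rw [integral_prod_mul (fun x : ℝ => Complex.exp (((t.re + t.im * r : ℝ) : ℂ) * x * Complex.I))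
    (fun x : ℝ => Complex.exp (((t.im * σ : ℝ) : ℂ) * x * Complex.I)), ← charFun_apply_real, ← charFun_apply_real, charFun_gaussianReal,
    charFun_gaussianReal, ← Complex.exp_add]
  congr 1
  have hσ2' : (σ : ℂ) ^ 2 = 1 - (r : ℂ) ^ 2 := by exact_mod_cast hσ2
  push_cast
  simp only [mul_zero, zero_mul, zero_sub]
  linear_combination (- (t.im : ℂ) ^ 2 / 2) * hσ2'

lemma tendsto_charFun_signSum (r : ℝ) (hr0 : 0 < r) (hr1 : r < 1) (t : ℂ) :
    Filter.Tendsto (fun n : ℕ => charFun ((signSum r n).map ((Real.sqrt n)⁻¹ • ·)) t) Filter.atTop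
      (nhds (charFun (gaussPair r) t)) := by
  have := signPair_prob r hr0 hr1
  rw [charFun_gaussPair r hr0 hr1]
  simp_rw [charFun_map_smul, charFun_signSum r hr0 hr1]
  set V := t.re ^ 2 + 2 * r * t.re * t.im + t.im ^ 2 with hV
  by_cases ht : t = 0
  · subst ht; simp [hV, charFun_zero]
  have hVpos : 0 < V := by
    have h0 : t.re ≠ 0 ∨ t.im ≠ 0 := by
      by_contra h
      push Not at h
      exact ht (Complex.ext h.1 h.2)
    have e : V = (t.re + r * t.im) ^ 2 + (1 - r ^ 2) * t.im ^ 2 := by rw [hV]; ring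
    have h1 : 0 < 1 - r ^ 2 := by nlinarith
    rw [e]
    by_cases h : t.im = 0
    · rw [h]
      have : t.re ≠ 0 := by tauto
      simp; positivity
    · positivity
  set s := Real.sqrt V with hs
  have hs0 : 0 < s := Real.sqrt_pos.2 hVpos
  have hs2 : s ^ 2 = V := Real.sq_sqrt hVpos.le
  set X : ℂ → ℝ := fun z => s⁻¹ * (z.re * t.re + z.im * t.im) with hX
  have hXc : Continuous X := by fun_prop
  have key := tendsto_charFun_inv_sqrt_mul_pow (P := signPair r) (X := X) hXc.aemeasurable
    (by
      rw [integral_signPair r hr0 hr1]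
      simp [hX]
      ring)
    (by
      rw [integral_signPair r hr0 hr1]
      simp [hX, mul_pow]
      field_simp
      rw [hs2, hV]
      ring) s
  have e1 : (Complex.exp (-((V : ℝ) : ℂ) / 2)) = Complex.exp (-(s : ℂ) ^ 2 / 2) := by
    rw [← hs2]; push_cast; rfl
  rw [e1]
  convert key using 3 with n
  generalize (Real.sqrt n)⁻¹ = q
  rw [charFun_apply, charFun_apply_real, integral_map hXc.aemeasurable
    (Continuous.aestronglyMeasurable (by fun_prop))]
  congr 1
  funext z
  congr 2
  rw [Complex.inner]
  simp only [hX]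
  norm_cast
  have : s * s⁻¹ = 1 := mul_inv_cancel₀ hs0.ne'
  simp
  linear_combination (-q * (z.re * t.re + z.im * t.im)) * this

lemma sdpi_limit (c : ℝ) (μ : ℕ → ProbabilityMeasure ℂ) (μ₀ : ProbabilityMeasure ℂ)
    (h : Filter.Tendsto μ Filter.atTop (nhds μ₀)) (hs : ∀ n, SDPI c (μ n)) : SDPI c μ₀ := by
  intro f g hf hg ⟨a, b, ha, hab⟩ ⟨M, hM⟩
  have hpos : ∀ x, 0 < f x := fun x => ha.trans_le (hab x).1
  have hb : 0 ≤ b := (hpos 0).le.trans (hab 0).2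
  have hfabs : ∀ x, |f x| ≤ b := fun x => by rw [abs_of_pos (hpos x)]; exact (hab x).2
  have hfl : Continuous fun x => f x * Real.log (f x) :=
    hf.mul (hf.log fun x => (hpos x).ne')
  have hlim : ∀ F : ℂ → ℝ, Continuous F → ∀ B : ℝ, (∀ x, |F x| ≤ B) →
      Filter.Tendsto (fun n => ∫ z, F z ∂(μ n : Measure ℂ)) Filter.atTop
        (nhds (∫ z, F z ∂(μ₀ : Measure ℂ))) := by
    intro F hF B hB
    exact (ProbabilityMeasure.tendsto_iff_forall_integral_tendsto.1 h)
      (BoundedContinuousFunction.ofNormedAddCommGroup F hF B hB)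
  have l1 := hlim (fun z => f z.re * g z.im) (by fun_prop) (b * M) (fun x => by
    rw [abs_mul]
    exact mul_le_mul (hfabs _) (hM _) (abs_nonneg _) hb)
  have l2 := hlim (fun z => f z.re) (by fun_prop) b (fun x => hfabs _)
  have l3 := hlim (fun z => f z.re * Real.log (f z.re)) (hfl.comp Complex.continuous_re)
    (b * max |Real.log a| |Real.log b|) (fun x => by
    rw [abs_mul]
    exact mul_le_mul (hfabs _) (log_abs_le ha (hab _).1 (hab _).2) (abs_nonneg _) hb)
  have l4 := hlim (fun z => Real.exp (g z.im)) (by fun_prop) (Real.exp M) (fun x => by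
    rw [Real.abs_exp]; exact Real.exp_le_exp.2 (le_of_abs_le (hM _)))
  have p2 : ∫ z : ℂ, f z.re ∂(μ₀ : Measure ℂ) ≠ 0 :=
    (ha.trans_le (avg_bound _ (fun z => f z.re) (by fun_prop) a b (fun z => hab _)).1).ne'
  have p4 : ∫ z : ℂ, Real.exp (g z.im) ∂(μ₀ : Measure ℂ) ≠ 0 :=
    ((Real.exp_pos (-M)).trans_le (avg_bound _ (fun z => Real.exp (g z.im)) (by fun_prop)
      (Real.exp (-M)) (Real.exp M) (fun z => ⟨Real.exp_le_exp.2 (neg_le_of_abs_le (hM _)),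
        Real.exp_le_exp.2 (le_of_abs_le (hM _))⟩)).1).ne'
  exact le_of_tendsto_of_tendsto' l1
    (((l3.sub (l2.mul (l2.log p2))).const_mul c).add (l2.mul (l4.log p4)))
    (fun n => hs n f g hf hg ⟨a, b, ha, hab⟩ ⟨M, hM⟩)

lemma sdpi_gaussPair (r : ℝ) (hr0 : 0 < r) (hr1 : r < 1) : SDPI (r ^ 2) (gaussPair r) := by
  have hp : ∀ n : ℕ, IsProbabilityMeasure ((signSum r n).map ((Real.sqrt n)⁻¹ • ·)) := fun n => by
    have := signSum_prob r hr0 hr1 n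
    exact Measure.isProbabilityMeasure_map (by fun_prop)
  exact sdpi_limit (r ^ 2) (fun n => ⟨_, hp n⟩) ⟨gaussPair r, inferInstance⟩
    (ProbabilityMeasure.tendsto_of_tendsto_charFun (tendsto_charFun_signSum r hr0 hr1))
    (fun n => sdpi_smul _ _ (sdpi_signSum r hr0 hr1 n) _)

lemma sdpi_gauss (r : ℝ) (hr0 : 0 < r) (hr1 : r < 1) (f g : ℝ → ℝ) (hf : Continuous f)
    (hg : Continuous g) (hfb : ∃ a b : ℝ, 0 < a ∧ ∀ x, a ≤ f x ∧ f x ≤ b)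
    (hgb : ∃ M : ℝ, ∀ x, |g x| ≤ M) (γ : Measure ℝ) (hγ : γ = gaussianReal 0 1)
    (hout : (γ.prod γ).map (fun p : ℝ × ℝ => r * p.1 + Real.sqrt (1 - r ^ 2) * p.2) = γ) :
    ∫ p, f p.1 * g (r * p.1 + Real.sqrt (1 - r ^ 2) * p.2) ∂(γ.prod γ) ≤
      r ^ 2 * (∫ x, f x * Real.log (f x) ∂γ - (∫ x, f x ∂γ) * Real.log (∫ x, f x ∂γ))
      + (∫ x, f x ∂γ) * Real.log (∫ x, Real.exp (g x) ∂γ) := by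
  have hprob : IsProbabilityMeasure γ := by rw [hγ]; infer_instance
  have h := sdpi_gaussPair r hr0 hr1 f g hf hg hfb hgb
  obtain ⟨a, b, ha, hab⟩ := hfb
  have hfl : Continuous fun x => f x * Real.log (f x) :=
    hf.mul (hf.log fun x => (ha.trans_le (hab x).1).ne')
  have key : ∀ F : ℂ → ℝ, Continuous F → ∫ z, F z ∂(gaussPair r) =
      ∫ p : ℝ × ℝ, F ⟨p.1, r * p.1 + Real.sqrt (1 - r ^ 2) * p.2⟩ ∂(γ.prod γ) := fun F hF => by
    rw [gaussPair, integral_map (gaussPair_cont r).aemeasurable hF.aestronglyMeasurable, hγ]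
  have key1 : ∀ F : ℝ → ℝ, Continuous F → ∫ p : ℝ × ℝ, F p.1 ∂(γ.prod γ) = ∫ x, F x ∂γ :=
    fun F hF => by simp [integral_fun_fst]
  have key2 : ∀ F : ℝ → ℝ, Continuous F →
      ∫ p : ℝ × ℝ, F (r * p.1 + Real.sqrt (1 - r ^ 2) * p.2) ∂(γ.prod γ) = ∫ x, F x ∂γ :=
    fun F hF => by
      conv_rhs => rw [← hout]
      rw [integral_map (by fun_prop) hF.aestronglyMeasurable]
  rw [key (fun z => f z.re * g z.im) (by fun_prop), key (fun z => f z.re) (by fun_prop),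
    key (fun z => f z.re * Real.log (f z.re)) (hfl.comp Complex.continuous_re),
    key (fun z => Real.exp (g z.im)) (by fun_prop)] at h
  simp only [] at h
  rwa [key1 f hf, key1 _ hfl, key2 (fun x => Real.exp (g x)) (by fun_prop)] at h


lemma approx_cont (γ : Measure ℝ) [IsProbabilityMeasure γ] (h : ℝ → ℝ) (hm : Measurable h)
    (a b : ℝ) (hab : ∀ x, a ≤ h x ∧ h x ≤ b) :
    ∃ H : ℕ → ℝ → ℝ, (∀ n, Continuous (H n)) ∧ (∀ n x, a ≤ H n x ∧ H n x ≤ b) ∧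
      ∀ᵐ x ∂γ, Filter.Tendsto (fun n => H n x) Filter.atTop (nhds (h x)) := by
  have hLp : MemLp h 1 γ := MemLp.of_bound hm.aestronglyMeasurable (max |a| |b|)
    (Filter.Eventually.of_forall fun x => abs_le_max_abs_abs (hab x).1 (hab x).2)
  have hex : ∀ n : ℕ, ∃ g : BoundedContinuousFunction ℝ ℝ,
      eLpNorm (h - ⇑g) 1 γ ≤ ((n : ℝ≥0∞) + 1)⁻¹ ∧ MemLp (⇑g) 1 γ := fun n =>
    hLp.exists_boundedContinuous_eLpNorm_sub_le ENNReal.one_ne_top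
      (ENNReal.inv_ne_zero.2 (by finiteness))
  choose g hg hg' using hex
  have htm : TendstoInMeasure γ (fun n => ⇑(g n)) Filter.atTop h := by
    refine tendstoInMeasure_of_tendsto_eLpNorm one_ne_zero
      (fun n => (g n).continuous.aestronglyMeasurable) hm.aestronglyMeasurable ?_
    have hlim : Filter.Tendsto (fun n : ℕ => ((n : ℝ≥0∞) + 1)⁻¹) Filter.atTop (nhds 0) := by
      have := (Filter.tendsto_add_atTop_iff_nat 1).2 ENNReal.tendsto_inv_nat_nhds_zero
      simpa using this
    refine tendsto_of_tendsto_of_tendsto_of_le_of_le tendsto_const_nhds hlim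
      (fun n => zero_le) (fun n => ?_)
    rw [eLpNorm_sub_comm]
    exact hg n
  obtain ⟨ns, -, hns⟩ := htm.exists_seq_tendsto_ae
  refine ⟨fun n x => max a (min (g (ns n) x) b), fun n => by fun_prop, fun n x => ?_, ?_⟩
  · exact ⟨le_max_left _ _, max_le ((hab 0).1.trans (hab 0).2) (min_le_right _ _)⟩
  · filter_upwards [hns] with x hx
    have e : h x = max a (min (h x) b) := by
      rw [min_eq_left (hab x).2, max_eq_right (hab x).1]
    rw [e]
    exact (tendsto_const_nhds (x := a)).max (hx.min (tendsto_const_nhds (x := b)))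

lemma sdpi_gauss_meas (r : ℝ) (hr0 : 0 < r) (hr1 : r < 1) (f g : ℝ → ℝ) (hf : Measurable f)
    (hg : Measurable g) (a b M : ℝ) (ha : 0 < a) (hab : ∀ x, a ≤ f x ∧ f x ≤ b)
    (hM : ∀ x, |g x| ≤ M) (γ : Measure ℝ) (hγ : γ = gaussianReal 0 1)
    (hout : (γ.prod γ).map (fun p : ℝ × ℝ => r * p.1 + Real.sqrt (1 - r ^ 2) * p.2) = γ) :
    ∫ p, f p.1 * g (r * p.1 + Real.sqrt (1 - r ^ 2) * p.2) ∂(γ.prod γ) ≤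
      r ^ 2 * (∫ x, f x * Real.log (f x) ∂γ - (∫ x, f x ∂γ) * Real.log (∫ x, f x ∂γ))
      + (∫ x, f x ∂γ) * Real.log (∫ x, Real.exp (g x) ∂γ) := by
  have hprob : IsProbabilityMeasure γ := by rw [hγ]; infer_instance
  obtain ⟨F, hFc, hFb, hFl⟩ := approx_cont γ f hf a b hab
  obtain ⟨G, hGc, hGb, hGl⟩ := approx_cont γ g hg (-M) M (fun x => abs_le.1 (hM x))
  have hb : 0 < b := ha.trans_le ((hab 0).1.trans (hab 0).2)
  set T : ℝ × ℝ → ℝ := fun p => r * p.1 + Real.sqrt (1 - r ^ 2) * p.2 with hT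
  have hTm : Measurable T := by fun_prop
  have hFa : ∀ n x, |F n x| ≤ b := fun n x => by
    rw [abs_of_pos (ha.trans_le (hFb n x).1)]; exact (hFb n x).2
  have l1 : Filter.Tendsto (fun n => ∫ p, F n p.1 * G n (T p) ∂(γ.prod γ)) Filter.atTop
      (nhds (∫ p, f p.1 * g (T p) ∂(γ.prod γ))) := by
    refine tendsto_integral_of_dominated_convergence (fun _ => b * M) ?_ (integrable_const _) ?_ ?_
    · intro n
      have := hFc n
      have := hGc n
      exact Continuous.aestronglyMeasurable (by fun_prop)
    · intro n
      refine Filter.Eventually.of_forall fun p => ?_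
      rw [Real.norm_eq_abs, abs_mul]
      exact mul_le_mul (hFa _ _) (abs_le.2 (hGb _ _)) (abs_nonneg _) hb.le
    · have h1 : ∀ᵐ p ∂(γ.prod γ), Filter.Tendsto (fun n => F n p.1) Filter.atTop (nhds (f p.1)) :=
        Measure.quasiMeasurePreserving_fst.ae hFl
      have h2 : ∀ᵐ p ∂(γ.prod γ), Filter.Tendsto (fun n => G n (T p)) Filter.atTop
          (nhds (g (T p))) := by
        rw [← hout] at hGl
        exact ae_of_ae_map hTm.aemeasurable hGl
      filter_upwards [h1, h2] with p hp1 hp2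
      exact hp1.mul hp2
  have l2 : Filter.Tendsto (fun n => ∫ x, F n x ∂γ) Filter.atTop (nhds (∫ x, f x ∂γ)) :=
    tendsto_integral_of_dominated_convergence (fun _ => b)
      (fun n => (hFc n).aestronglyMeasurable) (integrable_const _)
      (fun n => Filter.Eventually.of_forall fun x => hFa n x) hFl
  have l3 : Filter.Tendsto (fun n => ∫ x, F n x * Real.log (F n x) ∂γ) Filter.atTop
      (nhds (∫ x, f x * Real.log (f x) ∂γ)) := by
    refine tendsto_integral_of_dominated_convergence
      (fun _ => b * max |Real.log a| |Real.log b|) ?_ (integrable_const _) ?_ ?_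
    · intro n
      have := (hFc n).measurable
      exact Measurable.aestronglyMeasurable (by fun_prop)
    · intro n
      refine Filter.Eventually.of_forall fun p => ?_
      rw [Real.norm_eq_abs, abs_mul]
      exact mul_le_mul (hFa _ _) (log_abs_le ha (hFb _ _).1 (hFb _ _).2) (abs_nonneg _) hb.le
    · filter_upwards [hFl] with x hx
      exact hx.mul (hx.log (ha.trans_le (hab x).1).ne')
  have l4 : Filter.Tendsto (fun n => ∫ x, Real.exp (G n x) ∂γ) Filter.atTop
      (nhds (∫ x, Real.exp (g x) ∂γ)) := by
    refine tendsto_integral_of_dominated_convergence (fun _ => Real.exp M) ?_ (integrable_const _)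
      ?_ ?_
    · intro n
      have := hGc n
      exact Continuous.aestronglyMeasurable (by fun_prop)
    · intro n
      refine Filter.Eventually.of_forall fun p => ?_
      rw [Real.norm_eq_abs, Real.abs_exp]
      exact Real.exp_le_exp.2 (hGb _ _).2
    · filter_upwards [hGl] with x hx
      exact (Real.continuous_exp.tendsto _).comp hx
  have hfi : Integrable f γ := Integrable.of_bound hf.aestronglyMeasurable b
    (Filter.Eventually.of_forall fun x => by
      rw [Real.norm_eq_abs, abs_of_pos (ha.trans_le (hab x).1)]; exact (hab x).2)
  have hgi : Integrable (fun x => Real.exp (g x)) γ :=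
    Integrable.of_bound (Measurable.aestronglyMeasurable (by fun_prop)) (Real.exp M)
    (Filter.Eventually.of_forall fun x => by
      rw [Real.norm_eq_abs, Real.abs_exp]; exact Real.exp_le_exp.2 (le_of_abs_le (hM x)))
  have p2 : ∫ x, f x ∂γ ≠ 0 := by
    have := integral_mono (integrable_const a) hfi (fun x => (hab x).1)
    simp at this
    linarith
  have p4 : ∫ x, Real.exp (g x) ∂γ ≠ 0 := by
    have := integral_mono (integrable_const (Real.exp (-M))) hgi
      (fun x => Real.exp_le_exp.2 (neg_le_of_abs_le (hM x)))
    simp only [integral_const, probReal_univ, one_smul] at this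
    have := Real.exp_pos (-M)
    linarith
  exact le_of_tendsto_of_tendsto' l1
    (((l3.sub (l2.mul (l2.log p2))).const_mul _).add (l2.mul (l4.log p4)))
    (fun n => sdpi_gauss r hr0 hr1 (F n) (G n) (hFc n) (hGc n) ⟨a, b, ha, hFb n⟩
      ⟨M, fun x => abs_le.2 (hGb n x)⟩ γ hγ hout)

/-- Truncation to `[1/(n+1), n+1]`. -/
noncomputable def clip (n : ℕ) (x : ℝ) : ℝ := max ((n : ℝ) + 1)⁻¹ (min x ((n : ℝ) + 1))

lemma clip_meas (n : ℕ) : Continuous (clip n) := by unfold clip; fun_prop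

lemma clip_aux (n : ℕ) : 0 < ((n : ℝ) + 1)⁻¹ ∧ ((n : ℝ) + 1)⁻¹ ≤ 1 ∧ (1 : ℝ) ≤ (n : ℝ) + 1 := by
  have : (1 : ℝ) ≤ (n : ℝ) + 1 := by simp
  exact ⟨by positivity, inv_le_one_of_one_le₀ this, this⟩

lemma clip_bd (n : ℕ) (x : ℝ) : ((n : ℝ) + 1)⁻¹ ≤ clip n x ∧ clip n x ≤ (n : ℝ) + 1 := by
  obtain ⟨h1, h2, h3⟩ := clip_aux n
  exact ⟨le_max_left _ _, max_le (h2.trans h3) (min_le_right _ _)⟩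

lemma clip_pos (n : ℕ) (x : ℝ) : 0 < clip n x := (clip_aux n).1.trans_le (clip_bd n x).1

lemma clip_le (n : ℕ) (x : ℝ) (hx : 0 ≤ x) : clip n x ≤ x + 1 := by
  obtain ⟨h1, h2, h3⟩ := clip_aux n
  exact max_le (by linarith) ((min_le_left _ _).trans (by linarith))

lemma clip_of_ge (n : ℕ) (x : ℝ) (hx : 1 ≤ x) : 1 ≤ clip n x ∧ clip n x ≤ x := by
  obtain ⟨h1, h2, h3⟩ := clip_aux n
  exact ⟨le_max_of_le_right (le_min hx h3), max_le (h2.trans hx) (min_le_left _ _)⟩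

lemma clip_of_le (n : ℕ) (x : ℝ) (hx : x ≤ 1) : x ≤ clip n x ∧ clip n x ≤ 1 := by
  obtain ⟨h1, h2, h3⟩ := clip_aux n
  exact ⟨le_max_of_le_right (le_min le_rfl (hx.trans h3)), max_le h2 ((min_le_left _ _).trans hx)⟩

lemma clip_tendsto (x : ℝ) (hx : 0 ≤ x) :
    Filter.Tendsto (fun n => clip n x) Filter.atTop (nhds x) := by
  have h1 : Filter.Tendsto (fun n : ℕ => ((n : ℝ) + 1)⁻¹) Filter.atTop (nhds 0) := by
    simpa using tendsto_one_div_add_atTop_nhds_zero_nat (𝕜 := ℝ)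
  have h2 : Filter.Tendsto (fun n : ℕ => min x ((n : ℝ) + 1)) Filter.atTop (nhds x) := by
    refine tendsto_const_nhds.congr' ?_
    obtain ⟨N, hN⟩ := exists_nat_ge x
    filter_upwards [Filter.eventually_ge_atTop N] with n hn
    have : (N : ℝ) ≤ n := by exact_mod_cast hn
    rw [min_eq_left (by linarith)]
  have := h1.max h2
  rwa [max_eq_right hx] at this

lemma clip_log (n : ℕ) (x : ℝ) (hx : 0 < x) : |Real.log (clip n x)| ≤ |Real.log x| := by
  rcases le_total 1 x with h | h
  · obtain ⟨h1, h2⟩ := clip_of_ge n x h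
    rw [abs_of_nonneg (Real.log_nonneg h1), abs_of_nonneg (Real.log_nonneg h)]
    exact Real.log_le_log (clip_pos n x) h2
  · obtain ⟨h1, h2⟩ := clip_of_le n x h
    rw [abs_of_nonpos (Real.log_nonpos (clip_pos n x).le h2), abs_of_nonpos (Real.log_nonpos hx.le h)]
    exact neg_le_neg (Real.log_le_log hx h1)

lemma clip_mul_log (n : ℕ) (x : ℝ) :
    |clip n x * Real.log (clip n x)| ≤ |x * Real.log x| + 1 := by
  rcases le_total 1 x with h | h
  · obtain ⟨h1, h2⟩ := clip_of_ge n x h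
    have : |clip n x * Real.log (clip n x)| ≤ |x * Real.log x| := by
      rw [abs_mul, abs_mul]
      refine mul_le_mul ?_ (clip_log n x (by linarith)) (abs_nonneg _) (abs_nonneg _)
      rw [abs_of_pos (clip_pos n x), abs_of_pos (by linarith)]
      exact h2
    linarith
  · obtain ⟨h1, h2⟩ := clip_of_le n x h
    have := Real.abs_log_mul_self_lt _ (clip_pos n x) h2
    rw [mul_comm] at this
    have := abs_nonneg (x * Real.log x)
    linarith

lemma sdpi_gauss_L (r : ℝ) (hr0 : 0 < r) (hr1 : r < 1) (f g : ℝ → ℝ) (hf : Measurable f)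
    (hg : Measurable g) (M : ℝ) (hf0 : ∀ x, 0 ≤ f x) 
    (hM : ∀ x, |g x| ≤ M) (γ : Measure ℝ) (hγ : γ = gaussianReal 0 1)
    (hfi : Integrable f γ) (hfli : Integrable (fun x => f x * Real.log (f x)) γ)
    (hf1 : ∫ x, f x ∂γ = 1)
    (hout : (γ.prod γ).map (fun p : ℝ × ℝ => r * p.1 + Real.sqrt (1 - r ^ 2) * p.2) = γ) :
    ∫ p, f p.1 * g (r * p.1 + Real.sqrt (1 - r ^ 2) * p.2) ∂(γ.prod γ) ≤
      r ^ 2 * (∫ x, f x * Real.log (f x) ∂γ) + Real.log (∫ x, Real.exp (g x) ∂γ) := by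
  have hprob : IsProbabilityMeasure γ := by rw [hγ]; infer_instance
  have hM0 : 0 ≤ M := (abs_nonneg _).trans (hM 0)
  set T : ℝ × ℝ → ℝ := fun p => r * p.1 + Real.sqrt (1 - r ^ 2) * p.2 with hT
  have hTm : Measurable T := by fun_prop
  have hFm : ∀ n, Measurable fun x => clip n (f x) := fun n => (clip_meas n).measurable.comp hf
  have l1 : Filter.Tendsto (fun n => ∫ p, clip n (f p.1) * g (T p) ∂(γ.prod γ)) Filter.atTop
      (nhds (∫ p, f p.1 * g (T p) ∂(γ.prod γ))) := by
    refine tendsto_integral_of_dominated_convergence (fun p => (f p.1 + 1) * M) ?_ ?_ ?_ ?_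
    · intro n
      have := hFm n
      exact Measurable.aestronglyMeasurable
        ((this.comp measurable_fst).mul (hg.comp hTm))
    · exact ((hfi.comp_fst γ).add (integrable_const 1)).mul_const M
    · intro n
      refine Filter.Eventually.of_forall fun p => ?_
      rw [Real.norm_eq_abs, abs_mul, abs_of_pos (clip_pos _ _)]
      exact mul_le_mul (clip_le _ _ (hf0 _)) (hM _) (abs_nonneg _) (by linarith [hf0 p.1])
    · exact Filter.Eventually.of_forall fun p => (clip_tendsto _ (hf0 _)).mul_const _
  have l2 : Filter.Tendsto (fun n => ∫ x, clip n (f x) ∂γ) Filter.atTop (nhds (∫ x, f x ∂γ)) := by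
    refine tendsto_integral_of_dominated_convergence (fun x => f x + 1)
      (fun n => (hFm n).aestronglyMeasurable) (hfi.add (integrable_const _)) ?_ ?_
    · intro n
      refine Filter.Eventually.of_forall fun x => ?_
      rw [Real.norm_eq_abs, abs_of_pos (clip_pos _ _)]
      exact clip_le _ _ (hf0 _)
    · exact Filter.Eventually.of_forall fun x => clip_tendsto _ (hf0 _)
  have l3 : Filter.Tendsto (fun n => ∫ x, clip n (f x) * Real.log (clip n (f x)) ∂γ) Filter.atTop
      (nhds (∫ x, f x * Real.log (f x) ∂γ)) := by
    refine tendsto_integral_of_dominated_convergence (fun x => |f x * Real.log (f x)| + 1) ?_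
      (hfli.abs.add (integrable_const _)) ?_ ?_
    · intro n
      have := hFm n
      exact Measurable.aestronglyMeasurable (by fun_prop)
    · intro n
      exact Filter.Eventually.of_forall fun x => clip_mul_log _ _
    · refine Filter.Eventually.of_forall fun x => ?_
      exact (Real.continuous_mul_log.tendsto _).comp (clip_tendsto _ (hf0 x))
  have p2 : ∫ x, f x ∂γ ≠ 0 := by rw [hf1]; exact one_ne_zero
  have := le_of_tendsto_of_tendsto' l1
    (((l3.sub (l2.mul (l2.log p2))).const_mul (r ^ 2)).add
      (l2.mul (tendsto_const_nhds (x := Real.log (∫ x, Real.exp (g x) ∂γ)))))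
    (fun n => sdpi_gauss_meas r hr0 hr1 _ g (hFm n) hg _ _ M (clip_aux n).1
      (fun x => clip_bd n (f x)) hM γ hγ hout)
  simpa [hf1] using this


lemma gauss_out (r m : ℝ) (hr0 : 0 < r) (hr1 : r < 1) :
    ((gaussianReal m 1).prod (gaussianReal 0 1)).map
      (fun p : ℝ × ℝ => r * p.1 + Real.sqrt (1 - r ^ 2) * p.2) = gaussianReal (r * m) 1 := by
  refine Measure.ext_of_charFun ?_
  ext t
  rw [charFun_apply_real, integral_map (Continuous.aemeasurable (by fun_prop))
    (Continuous.aestronglyMeasurable (by fun_prop))]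
  set σ := Real.sqrt (1 - r ^ 2) with hσ
  have hσ2 : σ ^ 2 = 1 - r ^ 2 := Real.sq_sqrt (by nlinarith)
  have : ∀ p : ℝ × ℝ, Complex.exp ((t : ℂ) * ((r * p.1 + σ * p.2 : ℝ) : ℂ) * Complex.I)
      = Complex.exp (((t * r : ℝ) : ℂ) * p.1 * Complex.I) *
        Complex.exp (((t * σ : ℝ) : ℂ) * p.2 * Complex.I) := by
    intro p
    rw [← Complex.exp_add]
    congr 1
    push_cast
    ring
  simp_rw [this]
  rw [integral_prod_mul (fun x : ℝ => Complex.exp (((t * r : ℝ) : ℂ) * x * Complex.I))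
    (fun x : ℝ => Complex.exp (((t * σ : ℝ) : ℂ) * x * Complex.I)), ← charFun_apply_real,
    ← charFun_apply_real, charFun_gaussianReal, charFun_gaussianReal, charFun_gaussianReal,
    ← Complex.exp_add]
  congr 1
  have hσ2' : (σ : ℂ) ^ 2 = 1 - (r : ℂ) ^ 2 := by exact_mod_cast hσ2
  push_cast
  linear_combination (- (t : ℂ) ^ 2 / 2) * hσ2'

lemma gauss_tilt (m : ℝ) :
    gaussianReal m 1 = (gaussianReal 0 1).tilted (fun x => m * x) := by
  have hZ : ∫ x, Real.exp (m * x) ∂(gaussianReal 0 1) = Real.exp (m ^ 2 / 2) := by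
    have := congrFun (mgf_id_gaussianReal (μ := 0) (v := 1)) m
    simpa [mgf] using this
  rw [Measure.tilted, hZ, gaussianReal_of_var_ne_zero _ one_ne_zero,
    gaussianReal_of_var_ne_zero _ one_ne_zero,
    ← withDensity_mul _ (measurable_gaussianPDF _ _) (by fun_prop)]
  congr 1
  ext x
  simp only [Pi.mul_apply, gaussianPDF]
  rw [← ENNReal.ofReal_mul (gaussianPDFReal_nonneg _ _ _)]
  congr 1
  simp only [gaussianPDFReal]
  rw [← Real.exp_sub, mul_assoc _ (Real.exp _) (Real.exp _), ← Real.exp_add]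
  congr 2
  simp only [NNReal.coe_one]
  ring

lemma gauss_llr (m : ℝ) : gaussianReal m 1 ≪ gaussianReal 0 1 ∧
    Integrable (llr (gaussianReal m 1) (gaussianReal 0 1)) (gaussianReal m 1) ∧
    ∫ x, llr (gaussianReal m 1) (gaussianReal 0 1) x ∂(gaussianReal m 1) = m ^ 2 / 2 := by
  have hac : gaussianReal m 1 ≪ gaussianReal 0 1 := by
    rw [gauss_tilt m]; exact tilted_absolutelyContinuous _ _
  have hZ : ∫ x, Real.exp (m * x) ∂(gaussianReal 0 1) = Real.exp (m ^ 2 / 2) := by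
    have := congrFun (mgf_id_gaussianReal (μ := 0) (v := 1)) m
    simpa [mgf] using this
  have h1 : llr (gaussianReal m 1) (gaussianReal 0 1) =ᵐ[gaussianReal m 1]
      fun x => m * x - m ^ 2 / 2 := by
    refine hac.ae_le ?_
    have := log_rnDeriv_tilted_left_self (μ := gaussianReal 0 1) (f := fun x => m * x)
      (integrable_exp_mul_gaussianReal m)
    rw [← gauss_tilt, hZ, Real.log_exp] at this
    exact this
  have hid : Integrable (fun x : ℝ => x) (gaussianReal m 1) := by
    exact (memLp_id_gaussianReal (μ := m) (v := 1) 1).integrable (by simp)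
  refine ⟨hac, ((hid.const_mul m).sub (integrable_const _)).congr h1.symm, ?_⟩
  rw [integral_congr_ae h1, integral_sub (hid.const_mul m) (integrable_const _),
    integral_const_mul, integral_id_gaussianReal]
  simp
  ring

lemma sdpi_upper (r : ℝ) (hr0 : 0 < r) (hr1 : r < 1) (Q : Measure ℝ) [IsProbabilityMeasure Q]
    (γ : Measure ℝ) (hγ : γ = gaussianReal 0 1) (hac : Q ≪ γ) (hint : Integrable (llr Q γ) Q)
    (P : Measure ℝ) (hP : P = (Q.prod γ).map
      (fun p : ℝ × ℝ => r * p.1 + Real.sqrt (1 - r ^ 2) * p.2)) :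
    P ≪ γ ∧ Integrable (llr P γ) P ∧ ∫ x, llr P γ x ∂P ≤ r ^ 2 * ∫ x, llr Q γ x ∂Q := by
  have : IsProbabilityMeasure γ := by rw [hγ]; infer_instance
  set T : ℝ × ℝ → ℝ := fun p : ℝ × ℝ => r * p.1 + Real.sqrt (1 - r ^ 2) * p.2 with hT
  have hTm : Measurable T := by fun_prop
  have hPp : IsProbabilityMeasure P := by
    rw [hP]; exact Measure.isProbabilityMeasure_map hTm.aemeasurable
  have hout : (γ.prod γ).map T = γ := by
    have := gauss_out r 0 hr0 hr1
    rw [hγ]; simpa using this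
  have hfin : P ≪ γ ∧ Integrable (llr P γ) P := by
    rw [← InformationTheory.klDiv_ne_top_iff]
    have h1 : InformationTheory.klDiv P γ ≤ InformationTheory.klDiv Q γ := by
      calc InformationTheory.klDiv P γ
          = InformationTheory.klDiv ((Q.prod γ).map T) ((γ.prod γ).map T) := by rw [← hP, hout]
        _ ≤ InformationTheory.klDiv (Q.prod γ) (γ.prod γ) :=
            InformationTheory.klDiv_map_le _ _ hTm
        _ = InformationTheory.klDiv Q γ := by
            rw [← Measure.compProd_const, ← Measure.compProd_const,
              InformationTheory.klDiv_compProd_left]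
    exact ne_top_of_le_ne_top (InformationTheory.klDiv_ne_top hac hint) h1
  obtain ⟨hPac, hPint⟩ := hfin
  refine ⟨hPac, hPint, ?_⟩
  set f : ℝ → ℝ := fun x => (Q.rnDeriv γ x).toReal with hf
  set h : ℝ → ℝ := fun x => (P.rnDeriv γ x).toReal with hh
  have hfm : Measurable f := (Measure.measurable_rnDeriv _ _).ennreal_toReal
  have hhm : Measurable h := (Measure.measurable_rnDeriv _ _).ennreal_toReal
  have hh0 : ∀ x, 0 ≤ h x := fun x => ENNReal.toReal_nonneg
  have hhi : Integrable h γ := Measure.integrable_toReal_rnDeriv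
  have hh1 : ∫ x, h x ∂γ = 1 := by
    rw [hh, Measure.integral_toReal_rnDeriv hPac]; simp
  have hf1 : ∫ x, f x ∂γ = 1 := by
    rw [hf, Measure.integral_toReal_rnDeriv hac]; simp
  have hfl : ∫ x, f x * Real.log (f x) ∂γ = ∫ x, llr Q γ x ∂Q := integral_rnDeriv_mul_log hac
  have hfli : Integrable (fun x => f x * Real.log (f x)) γ :=
    (integrable_rnDeriv_mul_log_iff hac).2 hint
  set g : ℕ → ℝ → ℝ := fun n x => Real.log (clip n (h x)) with hg
  have hgm : ∀ n, Measurable (g n) := fun n =>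
    Real.measurable_log.comp ((clip_meas n).measurable.comp hhm)
  have hgb : ∀ n, ∃ M, ∀ x, |g n x| ≤ M := fun n =>
    ⟨_, fun x => log_abs_le (clip_aux n).1 (clip_bd n (h x)).1 (clip_bd n (h x)).2⟩
  have hstep : ∀ n, ∫ x, g n x ∂P ≤ r ^ 2 * ∫ x, llr Q γ x ∂Q
      + Real.log (∫ x, clip n (h x) ∂γ) := by
    intro n
    obtain ⟨M, hM⟩ := hgb n
    have key := sdpi_gauss_L r hr0 hr1 f (g n) hfm (hgm n) M (fun x => ENNReal.toReal_nonneg) hM γ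
      hγ Measure.integrable_toReal_rnDeriv hfli hf1 hout
    have e1 : ∫ x, Real.exp (g n x) ∂γ = ∫ x, clip n (h x) ∂γ :=
      integral_congr_ae (Filter.Eventually.of_forall fun x => Real.exp_log (clip_pos n (h x)))
    have e2 : ∫ x, g n x ∂P
        = ∫ p, f p.1 * g n (r * p.1 + Real.sqrt (1 - r ^ 2) * p.2) ∂(γ.prod γ) := by
      have i1 : Integrable (fun p : ℝ × ℝ => g n (T p)) (Q.prod γ) :=
        Integrable.of_bound ((hgm n).comp hTm).aestronglyMeasurable M
          (Filter.Eventually.of_forall fun p => hM _)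
      have i2 : Integrable (fun p : ℝ × ℝ => f p.1 * g n (T p)) (γ.prod γ) := by
        have j : Integrable (fun p : ℝ × ℝ => f p.1) (γ.prod γ) :=
          Integrable.comp_fst (f := f) Measure.integrable_toReal_rnDeriv γ
        exact j.mul_bdd ((hgm n).comp hTm).aestronglyMeasurable
          (Filter.Eventually.of_forall fun p => hM _)
      rw [hP, integral_map hTm.aemeasurable (hgm n).aestronglyMeasurable, integral_prod _ i1,
        ← integral_toReal_rnDeriv_mul hac]
      change _ = ∫ p, f p.1 * g n (T p) ∂(γ.prod γ)
      rw [integral_prod _ i2]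
      simp only [integral_const_mul, hf]
    rw [e2, ← hfl, ← e1]
    exact key
  have hlim1 : Filter.Tendsto (fun n => ∫ x, g n x ∂P) Filter.atTop
      (nhds (∫ x, llr P γ x ∂P)) := by
    have hpos : ∀ᵐ x ∂P, 0 < h x := by
      filter_upwards [Measure.rnDeriv_pos hPac, hPac.ae_le (Measure.rnDeriv_lt_top P γ)]
        with x h1 h2 using ENNReal.toReal_pos h1.ne' h2.ne
    refine tendsto_integral_of_dominated_convergence (fun x => |llr P γ x|)
      (fun n => (hgm n).aestronglyMeasurable) hPint.abs (fun n => ?_) ?_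
    · filter_upwards [hpos] with x hx using clip_log n (h x) hx
    · filter_upwards [hpos] with x hx
      exact (Real.continuousAt_log hx.ne').tendsto.comp (clip_tendsto (h x) hx.le)
  have hlim2 : Filter.Tendsto (fun n => ∫ x, clip n (h x) ∂γ) Filter.atTop (nhds 1) := by
    rw [← hh1]
    refine tendsto_integral_of_dominated_convergence (fun x => h x + 1)
      (fun n => ((clip_meas n).measurable.comp hhm).aestronglyMeasurable)
      (hhi.add (integrable_const _)) (fun n => ?_) ?_
    · refine Filter.Eventually.of_forall fun x => ?_
      rw [Real.norm_of_nonneg (clip_pos n _).le]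
      exact clip_le n _ (hh0 x)
    · exact Filter.Eventually.of_forall fun x => clip_tendsto (h x) (hh0 x)
  have hlim3 := (Real.continuousAt_log one_ne_zero).tendsto.comp hlim2
  rw [Real.log_one] at hlim3
  have := le_of_tendsto_of_tendsto' hlim1 (hlim3.const_add (r ^ 2 * ∫ x, llr Q γ x ∂Q)) hstep
  simpa using this

/-- For the jointly Gaussian pair with unit variances and correlation
`ρ ∈ (0,1)` — i.e. `X ~ N(0,1)` and `Y = ρX + √(1−ρ²)Z` with `Z ~ N(0,1)` independent
of `X`, so that `P_Y = N(0,1)` — the supremum of `D(Q_Y ‖ P_Y)/D(Q ‖ P_X)` over all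
probability measures `Q` on `ℝ` with `0 < D(Q ‖ P_X) < ∞` equals `ρ²`; that is,
`s*(X;Y) = ρ²` (and by symmetry `s*(Y;X) = ρ²`, so `ρ*(X,Y) = ρ²`). -/
theorem gaussian_sStar (hρ0 : 0 < ρ) (hρ1 : ρ < 1) :
    sSup { r : ℝ≥0∞ | ∃ Q : Measure ℝ, IsProbabilityMeasure Q ∧
        0 < klM Q (gaussianReal 0 1) ∧ klM Q (gaussianReal 0 1) < ⊤ ∧
        r = klM (gaussChanOut ρ Q) (gaussianReal 0 1) / klM Q (gaussianReal 0 1) }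
      = ENNReal.ofReal (ρ ^ 2) := by
  apply le_antisymm
  · refine sSup_le ?_
    rintro _ ⟨Q, hQ, h0, htop, rfl⟩
    refine ENNReal.div_le_of_le_mul ?_
    have hc : Q ≪ gaussianReal 0 1 ∧ Integrable (llr Q (gaussianReal 0 1)) Q := by
      by_contra hcon
      rw [klM, if_neg hcon] at htop
      exact lt_irrefl _ htop
    obtain ⟨h1, h2, h3⟩ := sdpi_upper ρ hρ0 hρ1 Q _ rfl hc.1 hc.2 (gaussChanOut ρ Q) rfl
    rw [klM, klM, if_pos hc, if_pos ⟨h1, h2⟩, ← ENNReal.ofReal_mul (by positivity)]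
    exact ENNReal.ofReal_le_ofReal h3
  · refine le_sSup ⟨gaussianReal 1 1, inferInstance, ?_⟩
    have hk : ∀ m : ℝ, klM (gaussianReal m 1) (gaussianReal 0 1) = ENNReal.ofReal (m ^ 2 / 2) := by
      intro m
      obtain ⟨h1, h2, h3⟩ := gauss_llr m
      rw [klM, if_pos ⟨h1, h2⟩, h3]
    have ho : gaussChanOut ρ (gaussianReal 1 1) = gaussianReal ρ 1 := by
      rw [gaussChanOut, gauss_out ρ 1 hρ0 hρ1, mul_one]
    rw [ho, hk, hk]
    refine ⟨by simp, ENNReal.ofReal_lt_top, ?_⟩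
    rw [← ENNReal.ofReal_div_of_pos (by norm_num)]
    congr 1
    ring

end
end
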